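/- arXiv:2311.05926 — 3 statements merged into one kernel-verified Lean document; each statement's English description precedes it below -/
import Mathlib

section
/- Let T > 0 and let D ⊂ ℝ^d (d ≥ 1) be a bounded, open, connected set, D̄ its closure, ∂D its boundary. Let d' > 0 be a constant. Let w : [0,T] × D̄ → ℝ be continuous, and assume that on (0,T] × D the time derivative ∂w/∂t exists and is continuous and w(t,·) is twice continuously differentiable in x. Let c₁, c₂, c₃, c₄ : (0,T] × D → ℝ be bounded measurable functions with c₂ ≥ 0, c₃ ≥ 0, c₄ ≥ 0. Assume: (i) for all (t,x) ∈ (0,T] × D, ∂w/∂t(t,x) − d'·Δw(t,x) ≥ c₁(t,x)·w(t,x) + c₃(t,x)·∫_D c₂(t,y)·w(t,y) dy + ∫_D c₄(t,y)·w(t,y) dy; (ii) w(t,x) ≥ 0 for all t ∈ [0,T] and x ∈ ∂D; (iii) w(0,x) ≥ 0 for all x ∈ D; and (iv) w(0,·) is not identically zero on D. Then w(t,x) > 0 for all (t,x) ∈ (0,T] × D. -/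
open MeasureTheory Real Set

/-- The Laplacian in the spatial variable: `Δf(x) = ∑ i, ∂²f(x)/∂xᵢ²`. -/
noncomputable def laplacian {d : ℕ} (f : EuclideanSpace ℝ (Fin d) → ℝ)
    (x : EuclideanSpace ℝ (Fin d)) : ℝ :=
  ∑ i, fderiv ℝ (fun y => fderiv ℝ f y (EuclideanSpace.single i 1)) x (EuclideanSpace.single i 1)

/-!
At a negative minimum of `exp (-γ t) w(t, x)` one has `∂w/∂t ≤ γ w` and `Δw ≥ 0`, while the integral
term is at least `w` times the mass of the kernel. For `γ` large this contradicts the differential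
inequality, so `w ≥ 0`. The integral term can then be dropped, and `w` is a supersolution of the
local equation `∂w/∂t = d' Δw - M w`. If `w(t₀, x₀) > 0`, put
`s(t, x) = r² + σ (t - t₀) - |x - x₀|²`. On the expanding ball `s ≥ 0`, `w` dominates a small
multiple of `exp (-l (t - t₀)) s²`, which is a subsolution for `l` large. The rate `σ` is at our
disposal, so positivity reaches the whole of any ball in the domain after an arbitrarily short time,
and connectedness carries it through the domain.
-/

open Filter Topology
open scoped Laplacian RealInnerProductSpace

section SecondDerivatives

variable {V : Type*} [NormedAddCommGroup V] [NormedSpace ℝ V] {f : V → ℝ} {x : V}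

theorem deriv_deriv_nonneg_of_isLocalMin {f : ℝ → ℝ} {a : ℝ} (h : IsLocalMin f a)
    (hc : ContinuousAt f a) : 0 ≤ deriv (deriv f) a := by
  by_contra! hneg
  have hmax := isLocalMax_of_deriv_deriv_neg hneg h.deriv_eq_zero hc
  have hconst : f =ᶠ[𝓝 a] fun _ => f a := by
    filter_upwards [h, hmax] with x hmin hmax using le_antisymm hmax hmin
  rw [hconst.deriv.deriv_eq] at hneg
  simp at hneg

theorem differentiableAt_fderiv_apply (hf : ContDiffAt ℝ 2 f x) (v : V) :
    DifferentiableAt ℝ (fun y => fderiv ℝ f y v) x :=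
  ((hf.fderiv_right (m := 1) (by norm_num)).differentiableAt (by norm_num)).clm_apply
    (differentiableAt_const v)

theorem fderiv_fderiv_apply_nonneg_of_isLocalMin (hf : ContDiffAt ℝ 2 f x) (h : IsLocalMin f x)
    (v : V) : 0 ≤ fderiv ℝ (fun y => fderiv ℝ f y v) x v := by
  have hline (s : ℝ) : HasDerivAt (fun s : ℝ => x + s • v) v s := by
    simpa using ((hasDerivAt_id s).smul_const v).const_add x
  have hx : x = x + (0 : ℝ) • v := by simp
  have htend : Tendsto (fun s : ℝ => x + s • v) (𝓝 0) (𝓝 x) := by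
    simpa only [← hx] using (hline 0).continuousAt.tendsto
  have hderiv : deriv (fun s : ℝ => f (x + s • v)) =ᶠ[𝓝 0] fun s => fderiv ℝ f (x + s • v) v := by
    filter_upwards [htend.eventually (hf.eventually (by simp))] with s hs
    exact ((hs.differentiableAt (by norm_num)).hasFDerivAt.comp_hasDerivAt s (hline s)).deriv
  have hderiv₂ : HasDerivAt (fun s : ℝ => fderiv ℝ f (x + s • v) v)
      (fderiv ℝ (fun y => fderiv ℝ f y v) x v) 0 :=
    (differentiableAt_fderiv_apply hf v).hasFDerivAt.comp_hasDerivAt_of_eq 0 (hline 0) hx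
  have hmin : IsLocalMin (fun s : ℝ => f (x + s • v)) 0 := by
    filter_upwards [htend.eventually h] with s hs
    rwa [← hx]
  have hcont : ContinuousAt (fun s : ℝ => f (x + s • v)) 0 :=
    hf.continuousAt.comp_of_eq (hline 0).continuousAt hx.symm
  have := deriv_deriv_nonneg_of_isLocalMin hmin hcont
  rwa [hderiv.deriv_eq, hderiv₂.deriv] at this

theorem nonpos_of_isLocalMinOn_Iic {g : ℝ → ℝ} {g' t : ℝ} (hg : HasDerivWithinAt g g' (Iic t) t)
    (hmin : IsLocalMinOn g (Iic t) t) : g' ≤ 0 := by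
  have hsegment : segment ℝ t (t + -1) ⊆ Iic t :=
    (convex_Iic t).segment_subset self_mem_Iic (by simp)
  simpa using hmin.hasFDerivWithinAt_nonneg hg.hasFDerivWithinAt
    (mem_posTangentConeAt_of_segment_subset hsegment)

theorem le_mul_of_isLocalMinOn_exp_mul {g : ℝ → ℝ} {g' t γ : ℝ}
    (hg : HasDerivWithinAt g g' (Iic t) t)
    (hmin : IsLocalMinOn (fun s => exp (-γ * s) * g s) (Iic t) t) : g' ≤ γ * g t := by
  have hderiv : HasDerivWithinAt (fun s => exp (-γ * s) * g s) (exp (-γ * t) * (g' - γ * g t))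
      (Iic t) t := by
    refine (((hasDerivAt_id t).const_mul (-γ)).exp.hasDerivWithinAt.fun_mul hg).congr_deriv ?_
    simp only [id]
    ring
  have hle := nonpos_of_isLocalMinOn_Iic hderiv hmin
  exact sub_nonpos.1 (nonpos_of_mul_nonpos_right hle (exp_pos _))

theorem fderiv_fderiv_sq_sub_norm_sq {V : Type*} [NormedAddCommGroup V] [InnerProductSpace ℝ V]
    (ρ : ℝ) (x₀ x v : V) :
    fderiv ℝ (fun y => fderiv ℝ (fun y => (ρ - ‖y - x₀‖ ^ 2) ^ 2) y v) x v =
      8 * ⟪x - x₀, v⟫ ^ 2 - 4 * (ρ - ‖x - x₀‖ ^ 2) * ‖v‖ ^ 2 := by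
  have hnorm (y : V) :
      HasFDerivAt (fun y => ρ - ‖y - x₀‖ ^ 2) (-(2 • innerSL ℝ (y - x₀))) y := by
    simpa using (((hasFDerivAt_id y).sub_const x₀).norm_sq).const_sub ρ
  have hinner : HasFDerivAt (fun y => ⟪y - x₀, v⟫) (innerSL ℝ v) x := by
    simp_rw [real_inner_comm v]
    exact (innerSL ℝ v).hasFDerivAt.comp x ((hasFDerivAt_id x).sub_const x₀)
  have hfirst (y : V) : fderiv ℝ (fun y => (ρ - ‖y - x₀‖ ^ 2) ^ 2) y v =
      -4 * ((ρ - ‖y - x₀‖ ^ 2) * ⟪y - x₀, v⟫) := by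
    rw [((hnorm y).pow 2).fderiv]
    simp only [Nat.add_one_sub_one, pow_one, smul_neg, neg_apply, smul_apply, innerSL_apply_apply,
      nsmul_eq_mul, smul_eq_mul, Nat.cast_ofNat]
    ring
  simp_rw [hfirst]
  rw [(((hnorm x).fun_mul hinner).const_mul (-4)).fderiv]
  simp only [smul_neg, smul_add, add_apply, neg_apply, smul_apply, innerSL_apply_apply,
    real_inner_self_eq_norm_sq, smul_eq_mul, nsmul_eq_mul, Nat.cast_ofNat]
  ring

end SecondDerivatives

section Laplacian

variable {d : ℕ} {f g : EuclideanSpace ℝ (Fin d) → ℝ} {x : EuclideanSpace ℝ (Fin d)}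

theorem laplacian_eq_tensor_laplacian (hf : ContDiffAt ℝ 2 f x) :
    laplacian f x = (Δ f) x := by
  have hfderiv : DifferentiableAt ℝ (fderiv ℝ f) x :=
    (hf.fderiv_right (m := 1) (by norm_num)).differentiableAt (by norm_num)
  rw [InnerProductSpace.laplacian_eq_iteratedFDeriv_orthonormalBasis f
    (EuclideanSpace.basisFun (Fin d) ℝ)]
  refine Finset.sum_congr rfl fun i _ => ?_
  rw [iteratedFDeriv_two_apply, fderiv_clm_apply hfderiv (differentiableAt_const _)]
  simp

theorem laplacian_sub (hf : ContDiffAt ℝ 2 f x) (hg : ContDiffAt ℝ 2 g x) :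
    laplacian (fun y => f y - g y) x = laplacian f x - laplacian g x := by
  rw [laplacian_eq_tensor_laplacian hf, laplacian_eq_tensor_laplacian hg,
    laplacian_eq_tensor_laplacian (hf.sub hg)]
  exact hf.laplacian_sub hg

theorem laplacian_const_mul (c : ℝ) (hf : ContDiffAt ℝ 2 f x) :
    laplacian (fun y => c * f y) x = c * laplacian f x := by
  rw [laplacian_eq_tensor_laplacian hf,
    laplacian_eq_tensor_laplacian (contDiffAt_const.mul hf)]
  exact InnerProductSpace.laplacian_smul c hf

theorem laplacian_nonneg_of_isLocalMin (hf : ContDiffAt ℝ 2 f x) (h : IsLocalMin f x) :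
    0 ≤ laplacian f x :=
  Finset.sum_nonneg fun _ _ => fderiv_fderiv_apply_nonneg_of_isLocalMin hf h _

theorem contDiff_sq_sub_norm_sq (ρ : ℝ) (x₀ : EuclideanSpace ℝ (Fin d)) :
    ContDiff ℝ 2 fun y => (ρ - ‖y - x₀‖ ^ 2) ^ 2 :=
  (contDiff_const.sub ((contDiff_id.sub contDiff_const).norm_sq ℝ)).pow 2

theorem laplacian_sq_sub_norm_sq (ρ : ℝ) (x₀ : EuclideanSpace ℝ (Fin d)) :
    laplacian (fun y => (ρ - ‖y - x₀‖ ^ 2) ^ 2) x =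
      8 * ‖x - x₀‖ ^ 2 - 4 * d * (ρ - ‖x - x₀‖ ^ 2) := by
  have hsum := (EuclideanSpace.basisFun (Fin d) ℝ).sum_sq_inner_left (x - x₀)
  simp only [EuclideanSpace.basisFun_apply] at hsum
  simp only [laplacian, fderiv_fderiv_sq_sub_norm_sq, ← Finset.mul_sum, Finset.sum_sub_distrib,
    hsum, PiLp.norm_single, norm_one, one_pow, mul_one, Finset.sum_const, Finset.card_univ,
    Fintype.card_fin, nsmul_eq_mul]
  ring

end Laplacian

section MinimumPrinciple

/-- The points of a space-time set `K` around which `K` contains a spatial neighbourhood in the same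
time slice and an interval of earlier times. The top slice of a cylinder qualifies, since a minimum
principle for parabolic operators only looks into the past. -/
def parabolicInterior {X : Type*} [TopologicalSpace X] (K : Set (ℝ × X)) : Set (ℝ × X) :=
  {p | (∀ᶠ s in 𝓝[≤] p.1, (s, p.2) ∈ K) ∧ ∀ᶠ y in 𝓝 p.2, (p.1, y) ∈ K}

theorem exists_neg_isMinOn_exp_mul {X : Type*} [TopologicalSpace X] {K : Set (ℝ × X)}
    (hK : IsCompact K) {z : ℝ × X → ℝ} (hz : ContinuousOn z K) (γ : ℝ) (hneg : ∃ p ∈ K, z p < 0) :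
    ∃ q ∈ K, z q < 0 ∧ IsMinOn (fun p => exp (-γ * p.1) * z p) K q := by
  obtain ⟨p, hp, hzp⟩ := hneg
  obtain ⟨q, hq, hmin⟩ := hK.exists_isMinOn ⟨p, hp⟩
    (f := fun p => exp (-γ * p.1) * z p) (by fun_prop)
  have hlt : exp (-γ * q.1) * z q < 0 :=
    (hmin hp).trans_lt (mul_neg_of_pos_of_neg (exp_pos _) hzp)
  exact ⟨q, hq, (pos_iff_neg_of_mul_neg hlt).1 (exp_pos _), hmin⟩

variable {d : ℕ} {κ : ℝ}

theorem parabolic_minimum_principle {K : Set (ℝ × EuclideanSpace ℝ (Fin d))} (hK : IsCompact K)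
    (hκ : 0 ≤ κ) (γ : ℝ) {z : ℝ → EuclideanSpace ℝ (Fin d) → ℝ}
    (hz : ContinuousOn (fun p : ℝ × EuclideanSpace ℝ (Fin d) => z p.1 p.2) K)
    (hneg : ∀ t x, (t, x) ∈ K → z t x < 0 → (∀ y, (t, y) ∈ K → z t x ≤ z t y) →
      (t, x) ∈ parabolicInterior K ∧ ContDiffAt ℝ 2 (z t) x ∧
        ∃ v, HasDerivWithinAt (fun s => z s x) v (Iic t) t ∧
          κ * laplacian (z t) x + γ * z t x < v) :
    ∀ p ∈ K, 0 ≤ z p.1 p.2 := by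
  by_contra! hcon
  obtain ⟨⟨t, x⟩, hq, hzq, hmin⟩ := exists_neg_isMinOn_exp_mul hK hz γ hcon
  have hslice : ∀ y, (t, y) ∈ K → z t x ≤ z t y := fun y hy =>
    le_of_mul_le_mul_left (hmin hy) (exp_pos (-γ * t))
  obtain ⟨⟨hpast, hspace⟩, hC2, v, hv, hlt⟩ := hneg t x hq hzq hslice
  have htime : v ≤ γ * z t x :=
    le_mul_of_isLocalMinOn_exp_mul hv (hpast.mono fun s hs => hmin hs)
  have hlap : 0 ≤ laplacian (z t) x := laplacian_nonneg_of_isLocalMin hC2 (hspace.mono hslice)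
  linarith [mul_nonneg hκ hlap]

end MinimumPrinciple

section Supersolutions

variable {d : ℕ} {κ a b : ℝ} {D : Set (EuclideanSpace ℝ (Fin d))}
  {w F G : ℝ → EuclideanSpace ℝ (Fin d) → ℝ}

/-- `w` is a classical supersolution of `∂w/∂t = κ Δw + F` on `(a, b] × D`, continuous up to the
parabolic boundary. The source `F` is a function of `(t, x)`; for an equation it is built from `w`
itself. Only the left time derivative is required, which at the final time `b` is the one that makes
sense for a function on `[a, b]`. -/
structure IsSupersolution (κ a b : ℝ) (D : Set (EuclideanSpace ℝ (Fin d)))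
    (w F : ℝ → EuclideanSpace ℝ (Fin d) → ℝ) : Prop where
  continuousOn : ContinuousOn (fun p : ℝ × EuclideanSpace ℝ (Fin d) => w p.1 p.2)
    (Icc a b ×ˢ closure D)
  contDiffOn : ∀ t ∈ Ioc a b, ContDiffOn ℝ 2 (w t) D
  exists_hasDerivWithinAt : ∀ t ∈ Ioc a b, ∀ x ∈ D, ∃ v,
    HasDerivWithinAt (fun s => w s x) v (Iic t) t ∧ κ * laplacian (w t) x + F t x ≤ v

namespace IsSupersolution

theorem mono_source (hw : IsSupersolution κ a b D w F)
    (hGF : ∀ t ∈ Ioc a b, ∀ x ∈ D, G t x ≤ F t x) : IsSupersolution κ a b D w G where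
  continuousOn := hw.continuousOn
  contDiffOn := hw.contDiffOn
  exists_hasDerivWithinAt t ht x hx := by
    obtain ⟨v, hv, hle⟩ := hw.exists_hasDerivWithinAt t ht x hx
    exact ⟨v, hv, by linarith [hGF t ht x hx]⟩

theorem mono_time (hw : IsSupersolution κ a b D w F) {a' b' : ℝ} (ha : a ≤ a') (hb : b' ≤ b) :
    IsSupersolution κ a' b' D w F where
  continuousOn := hw.continuousOn.mono (prod_mono (Icc_subset_Icc ha hb) subset_rfl)
  contDiffOn t ht := hw.contDiffOn t (Ioc_subset_Ioc ha hb ht)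
  exists_hasDerivWithinAt t ht := hw.exists_hasDerivWithinAt t (Ioc_subset_Ioc ha hb ht)

theorem continuousOn_slice (hw : IsSupersolution κ a b D w F) {t : ℝ} (ht : t ∈ Icc a b) :
    ContinuousOn (w t) (closure D) :=
  hw.continuousOn.comp (f := fun y => (t, y)) (by fun_prop) fun _ hy => ⟨ht, hy⟩

theorem nonneg_of_forall_neg_slice_min (hw : IsSupersolution κ a b D w F) (hDopen : IsOpen D)
    (hDbdd : Bornology.IsBounded D) (hκ : 0 ≤ κ) (γ : ℝ)
    (hF : ∀ t ∈ Ioc a b, ∀ x ∈ D, w t x < 0 → (∀ y ∈ D, w t x ≤ w t y) → γ * w t x < F t x)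
    (hbdry : ∀ t ∈ Icc a b, ∀ x ∈ frontier D, 0 ≤ w t x) (hinit : ∀ x ∈ D, 0 ≤ w a x) :
    ∀ t ∈ Icc a b, ∀ x ∈ D, 0 ≤ w t x := by
  suffices h : ∀ p ∈ Icc a b ×ˢ closure D, 0 ≤ w p.1 p.2 from
    fun t ht x hx => h (t, x) ⟨ht, subset_closure hx⟩
  refine parabolic_minimum_principle (isCompact_Icc.prod hDbdd.isCompact_closure) hκ γ
    hw.continuousOn fun t x ⟨ht, hx⟩ hneg hslice => ?_
  have hxD : x ∈ D := by
    by_contra hxD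
    exact hneg.not_ge (hbdry t ht x ⟨hx, by rwa [hDopen.interior_eq]⟩)
  have hat : a < t := ht.1.lt_of_ne fun (h : a = t) => hneg.not_ge (h ▸ hinit x hxD)
  have ht' : t ∈ Ioc a b := ⟨hat, ht.2⟩
  have hD : D ∈ 𝓝 x := hDopen.mem_nhds hxD
  obtain ⟨v, hv, hle⟩ := hw.exists_hasDerivWithinAt t ht' x hxD
  refine ⟨⟨?_, ?_⟩, (hw.contDiffOn t ht').contDiffAt hD, v, hv, ?_⟩
  · filter_upwards [Icc_mem_nhdsLE hat] with s hs using ⟨⟨hs.1, hs.2.trans ht.2⟩, hx⟩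
  · filter_upwards [hD] with y hy using ⟨ht, subset_closure hy⟩
  · linarith [hF t ht' x hxD hneg fun y hy => hslice y ⟨ht, subset_closure hy⟩]

end IsSupersolution

end Supersolutions

section Kernels

variable {X : Type*} [MeasureSpace X] {a b : ℝ} {D : Set X} {k : ℝ → X → X → ℝ}

/-- Nonnegative kernels `k t x y` on `D`, depending on a time `t ∈ (a, b]`, whose mass in `y` is
bounded uniformly in `t` and `x`. They are the kernels of the nonlocal terms
`∫ y in D, k t x y * w t y`. -/
structure IsBoundedKernel (a b : ℝ) (D : Set X) (k : ℝ → X → X → ℝ) : Prop where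
  nonneg : ∀ t ∈ Ioc a b, ∀ x ∈ D, ∀ y ∈ D, 0 ≤ k t x y
  integrableOn : ∀ t ∈ Ioc a b, ∀ x ∈ D, IntegrableOn (k t x) D
  exists_integral_le : ∃ N, ∀ t ∈ Ioc a b, ∀ x ∈ D, ∫ y in D, k t x y ≤ N

theorem mul_setIntegral_le_setIntegral_mul {X : Type*} [MeasurableSpace X] {μ : Measure X}
    {D : Set X} (hD : MeasurableSet D) {f u : X → ℝ} {m : ℝ} (hf : IntegrableOn f D μ)
    (hfu : IntegrableOn (fun y => f y * u y) D μ)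
    (hf_nonneg : ∀ y ∈ D, 0 ≤ f y) (hu : ∀ y ∈ D, m ≤ u y) :
    m * ∫ y in D, f y ∂μ ≤ ∫ y in D, f y * u y ∂μ := by
  rw [mul_comm, ← integral_mul_const]
  exact setIntegral_mono_on (hf.mul_const m) hfu hD fun y hy =>
    mul_le_mul_of_nonneg_left (hu y hy) (hf_nonneg y hy)

theorem integrableOn_section_of_bounded {S : Set ℝ} {c : ℝ → X → ℝ} (hD : MeasurableSet D)
    (hDfin : volume D ≠ ⊤) (hc : Measurable ((S ×ˢ D).domRestrict fun p => c p.1 p.2))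
    (hbdd : ∃ M, ∀ t ∈ S, ∀ x ∈ D, |c t x| ≤ M) {t : ℝ} (ht : t ∈ S) : IntegrableOn (c t) D := by
  obtain ⟨M, hM⟩ := hbdd
  have hmeas : Measurable fun y : D => c t y :=
    hc.comp (g := (S ×ˢ D).domRestrict fun p => c p.1 p.2)
      (f := fun y : D => ⟨(t, y), ht, y.2⟩) (by fun_prop)
  exact .of_bound hDfin.lt_top
    (aemeasurable_restrict_of_measurable_subtype hD hmeas).aestronglyMeasurable M
    (ae_restrict_of_forall_mem hD (hM t ht))

theorem setIntegral_mul_add_mul {X : Type*} [MeasurableSpace X] {μ : Measure X} {D : Set X}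
    (α : ℝ) {f g u : X → ℝ} (hf : IntegrableOn (fun y => f y * u y) D μ)
    (hg : IntegrableOn (fun y => g y * u y) D μ) :
    ∫ y in D, (α * f y + g y) * u y ∂μ = α * (∫ y in D, f y * u y ∂μ) + ∫ y in D, g y * u y ∂μ := by
  simp_rw [add_mul, mul_assoc]
  rw [integral_add (hf.const_mul α) hg, integral_const_mul]

theorem isBoundedKernel_mul_add {c₂ c₃ c₄ : ℝ → X → ℝ} (hD : MeasurableSet D)
    (hDfin : volume D ≠ ⊤)
    (hc₂int : ∀ t ∈ Ioc a b, IntegrableOn (c₂ t) D) (hc₄int : ∀ t ∈ Ioc a b, IntegrableOn (c₄ t) D)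
    (hc₂bdd : ∃ M, ∀ t ∈ Ioc a b, ∀ x ∈ D, |c₂ t x| ≤ M)
    (hc₃bdd : ∃ M, ∀ t ∈ Ioc a b, ∀ x ∈ D, |c₃ t x| ≤ M)
    (hc₄bdd : ∃ M, ∀ t ∈ Ioc a b, ∀ x ∈ D, |c₄ t x| ≤ M)
    (hc₂nn : ∀ t ∈ Ioc a b, ∀ x ∈ D, 0 ≤ c₂ t x) (hc₃nn : ∀ t ∈ Ioc a b, ∀ x ∈ D, 0 ≤ c₃ t x)
    (hc₄nn : ∀ t ∈ Ioc a b, ∀ x ∈ D, 0 ≤ c₄ t x) :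
    IsBoundedKernel a b D fun t x y => c₃ t x * c₂ t y + c₄ t y := by
  have hint : ∀ t ∈ Ioc a b, ∀ x, IntegrableOn (fun y => c₃ t x * c₂ t y + c₄ t y) D :=
    fun t ht x => ((hc₂int t ht).const_mul _).add (hc₄int t ht)
  refine ⟨fun t ht x hx y hy => ?_, fun t ht x _ => hint t ht x, ?_⟩
  · exact add_nonneg (mul_nonneg (hc₃nn t ht x hx) (hc₂nn t ht y hy)) (hc₄nn t ht y hy)
  · obtain ⟨M₂, hM₂⟩ := hc₂bdd
    obtain ⟨M₃, hM₃⟩ := hc₃bdd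
    obtain ⟨M₄, hM₄⟩ := hc₄bdd
    refine ⟨∫ _ in D, (M₃ * M₂ + M₄), fun t ht x hx => ?_⟩
    refine setIntegral_mono_on (hint t ht x) (integrableOn_const hDfin) hD fun y hy => ?_
    have h₃ : c₃ t x ≤ M₃ := (le_abs_self _).trans (hM₃ t ht x hx)
    exact add_le_add (mul_le_mul h₃ ((le_abs_self _).trans (hM₂ t ht y hy)) (hc₂nn t ht y hy)
      ((hc₃nn t ht x hx).trans h₃)) ((le_abs_self _).trans (hM₄ t ht y hy))

end Kernels

section NonlocalSupersolutions

variable {d : ℕ} {κ a b : ℝ} {D : Set (EuclideanSpace ℝ (Fin d))}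
  {w c : ℝ → EuclideanSpace ℝ (Fin d) → ℝ}
  {k : ℝ → EuclideanSpace ℝ (Fin d) → EuclideanSpace ℝ (Fin d) → ℝ}

namespace IsSupersolution

theorem nonneg_of_nonlocal
    (hw : IsSupersolution κ a b D w fun t x => c t x * w t x + ∫ y in D, k t x y * w t y)
    (hDopen : IsOpen D) (hDbdd : Bornology.IsBounded D) (hκ : 0 ≤ κ)
    (hc : ∃ M, ∀ t ∈ Ioc a b, ∀ x ∈ D, c t x ≤ M) (hk : IsBoundedKernel a b D k)
    (hbdry : ∀ t ∈ Icc a b, ∀ x ∈ frontier D, 0 ≤ w t x) (hinit : ∀ x ∈ D, 0 ≤ w a x) :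
    ∀ t ∈ Icc a b, ∀ x ∈ D, 0 ≤ w t x := by
  obtain ⟨M, hM⟩ := hc
  obtain ⟨N, hN⟩ := hk.exists_integral_le
  refine hw.nonneg_of_forall_neg_slice_min hDopen hDbdd hκ (M + N + 1)
    (fun t ht x hx hneg hmin => ?_) hbdry hinit
  have hkw : IntegrableOn (fun y => k t x y * w t y) D :=
    (hk.integrableOn t ht x hx).mul_continuousOn_of_subset
      (hw.continuousOn_slice (Ioc_subset_Icc_self ht)) hDopen.measurableSet
      hDbdd.isCompact_closure subset_closure
  have hlocal : M * w t x ≤ c t x * w t x := mul_le_mul_of_nonpos_right (hM t ht x hx) hneg.le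
  have hnonlocal : N * w t x ≤ ∫ y in D, k t x y * w t y :=
    calc N * w t x ≤ w t x * ∫ y in D, k t x y := by
          rw [mul_comm]
          exact mul_le_mul_of_nonpos_left (hN t ht x hx) hneg.le
      _ ≤ ∫ y in D, k t x y * w t y :=
          mul_setIntegral_le_setIntegral_mul hDopen.measurableSet (hk.integrableOn t ht x hx) hkw
            (hk.nonneg t ht x hx) hmin
  linarith

theorem local_of_nonlocal
    (hw : IsSupersolution κ a b D w fun t x => c t x * w t x + ∫ y in D, k t x y * w t y)
    (hDmeas : MeasurableSet D) {M : ℝ} (hc : ∀ t ∈ Ioc a b, ∀ x ∈ D, -M ≤ c t x)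
    (hk : ∀ t ∈ Ioc a b, ∀ x ∈ D, ∀ y ∈ D, 0 ≤ k t x y)
    (hnn : ∀ t ∈ Ioc a b, ∀ x ∈ D, 0 ≤ w t x) :
    IsSupersolution κ a b D w fun t x => -M * w t x := by
  refine hw.mono_source fun t ht x hx => ?_
  have hint : 0 ≤ ∫ y in D, k t x y * w t y := setIntegral_nonneg hDmeas fun y hy =>
    mul_nonneg (hk t ht x hx y hy) (hnn t ht y hy)
  linarith [mul_le_mul_of_nonneg_right (hc t ht x hx) (hnn t ht x hx)]

end IsSupersolution

theorem isSupersolution_of_hasDerivAt {w wt c₁ c₂ c₃ c₄ : ℝ → EuclideanSpace ℝ (Fin d) → ℝ}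
    (hDopen : IsOpen D) (hDbdd : Bornology.IsBounded D)
    (hw_cont : ContinuousOn (fun p : ℝ × EuclideanSpace ℝ (Fin d) => w p.1 p.2)
      (Icc a b ×ˢ closure D))
    (hw_t : ∀ t ∈ Ioc a b, ∀ x ∈ D, HasDerivAt (fun s => w s x) (wt t x) t)
    (hw_x : ∀ t ∈ Ioc a b, ContDiffOn ℝ 2 (w t) D)
    (hc₂int : ∀ t ∈ Ioc a b, IntegrableOn (c₂ t) D) (hc₄int : ∀ t ∈ Ioc a b, IntegrableOn (c₄ t) D)
    (hineq : ∀ t ∈ Ioc a b, ∀ x ∈ D,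
      c₁ t x * w t x + c₃ t x * (∫ y in D, c₂ t y * w t y) + (∫ y in D, c₄ t y * w t y) ≤
        wt t x - κ * laplacian (w t) x) :
    IsSupersolution κ a b D w fun t x =>
      c₁ t x * w t x + ∫ y in D, (c₃ t x * c₂ t y + c₄ t y) * w t y where
  continuousOn := hw_cont
  contDiffOn := hw_x
  exists_hasDerivWithinAt t ht x hx := by
    have hwt : ContinuousOn (w t) (closure D) :=
      hw_cont.comp (f := fun y => (t, y)) (by fun_prop) fun _ hy => ⟨Ioc_subset_Icc_self ht, hy⟩
    have hint {f : EuclideanSpace ℝ (Fin d) → ℝ} (hf : IntegrableOn f D) :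
        IntegrableOn (fun y => f y * w t y) D :=
      hf.mul_continuousOn_of_subset hwt hDopen.measurableSet hDbdd.isCompact_closure subset_closure
    refine ⟨wt t x, (hw_t t ht x hx).hasDerivWithinAt, ?_⟩
    rw [setIntegral_mul_add_mul (c₃ t x) (hint (hc₂int t ht)) (hint (hc₄int t ht))]
    linarith [hineq t ht x hx]

end NonlocalSupersolutions

section Barrier

variable {d : ℕ} {κ a b r σ l : ℝ} {x₀ : EuclideanSpace ℝ (Fin d)}

/-- The barrier for the spreading of positivity. At time `t ≥ 0` it is positive in the ball of
radius `√(r² + σ t)` around `x₀` and vanishes on the sphere bounding it; the exponential rate `l` is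
chosen in `exists_barrier_strict_subsolution` to make it a subsolution. -/
noncomputable def barrier (x₀ : EuclideanSpace ℝ (Fin d)) (r σ l t : ℝ)
    (y : EuclideanSpace ℝ (Fin d)) : ℝ :=
  exp (-l * t) * (r ^ 2 + σ * t - ‖y - x₀‖ ^ 2) ^ 2

/-- The space-time region over the time interval `[a, b]` on which the barrier started at time `a`
is compared with a supersolution. -/
def expandingBall (x₀ : EuclideanSpace ℝ (Fin d)) (r σ a b : ℝ) :
    Set (ℝ × EuclideanSpace ℝ (Fin d)) :=
  {p | p.1 ∈ Icc a b ∧ ‖p.2 - x₀‖ ^ 2 ≤ r ^ 2 + σ * (p.1 - a)}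

theorem expandingBall_subset (hσ : 0 ≤ σ) :
    expandingBall x₀ r σ a b ⊆ Icc a b ×ˢ Metric.closedBall x₀ √(r ^ 2 + σ * (b - a)) := by
  rintro ⟨t, y⟩ ⟨ht, hy⟩
  refine ⟨ht, mem_closedBall_iff_norm.2 (le_sqrt_of_sq_le (hy.trans ?_))⟩
  gcongr
  exact ht.2

theorem isCompact_expandingBall (hσ : 0 ≤ σ) : IsCompact (expandingBall x₀ r σ a b) :=
  (isCompact_Icc.prod (isCompact_closedBall _ _)).of_isClosed_subset
    ((isClosed_Icc.preimage continuous_fst).and (isClosed_le (by fun_prop) (by fun_prop)))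
    (expandingBall_subset hσ)

theorem mem_parabolicInterior_expandingBall {t : ℝ} {x : EuclideanSpace ℝ (Fin d)} (hat : a < t)
    (htb : t ≤ b) (hx : ‖x - x₀‖ ^ 2 < r ^ 2 + σ * (t - a)) :
    (t, x) ∈ parabolicInterior (expandingBall x₀ r σ a b) := by
  have hopen : IsOpen {p : ℝ × EuclideanSpace ℝ (Fin d) |
      ‖p.2 - x₀‖ ^ 2 < r ^ 2 + σ * (p.1 - a)} := isOpen_lt (by fun_prop) (by fun_prop)
  have hnhds := hopen.mem_nhds (x := (t, x)) hx
  constructor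
  · have hpast : ∀ᶠ s in 𝓝[≤] t, ‖x - x₀‖ ^ 2 < r ^ 2 + σ * (s - a) :=
      nhdsWithin_le_nhds ((Continuous.prodMk_left x).continuousAt.eventually hnhds)
    filter_upwards [Icc_mem_nhdsLE hat, hpast] with s hs hlt
      using ⟨⟨hs.1, hs.2.trans htb⟩, hlt.le⟩
  · filter_upwards [(Continuous.prodMk_right t).continuousAt.eventually hnhds] with y hy
      using ⟨⟨hat.le, htb⟩, le_of_lt hy⟩

theorem continuous_barrier :
    Continuous fun p : ℝ × EuclideanSpace ℝ (Fin d) => barrier x₀ r σ l p.1 p.2 := by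
  unfold barrier
  fun_prop

theorem contDiff_barrier (t : ℝ) : ContDiff ℝ 2 (barrier x₀ r σ l t) :=
  contDiff_const.mul (contDiff_sq_sub_norm_sq _ x₀)

theorem laplacian_barrier (t : ℝ) (y : EuclideanSpace ℝ (Fin d)) :
    laplacian (barrier x₀ r σ l t) y =
      exp (-l * t) * (8 * ‖y - x₀‖ ^ 2 - 4 * d * (r ^ 2 + σ * t - ‖y - x₀‖ ^ 2)) := by
  rw [← laplacian_sq_sub_norm_sq]
  exact laplacian_const_mul _ (contDiff_sq_sub_norm_sq _ x₀).contDiffAt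

theorem hasDerivAt_barrier (t : ℝ) (y : EuclideanSpace ℝ (Fin d)) :
    HasDerivAt (fun s => barrier x₀ r σ l s y)
      (exp (-l * t) * (2 * σ * (r ^ 2 + σ * t - ‖y - x₀‖ ^ 2)
        - l * (r ^ 2 + σ * t - ‖y - x₀‖ ^ 2) ^ 2)) t := by
  have hexp := ((hasDerivAt_id t).const_mul (-l)).exp
  have hsq := ((((hasDerivAt_id t).const_mul σ).const_add (r ^ 2)).sub_const (‖y - x₀‖ ^ 2)).pow 2
  refine (hexp.fun_mul hsq).congr_deriv ?_
  simp only [id, Pi.pow_apply]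
  ring

theorem barrier_zero_le {y : EuclideanSpace ℝ (Fin d)} (hy : ‖y - x₀‖ ≤ r) :
    barrier x₀ r σ l 0 y ≤ r ^ 4 := by
  have hsq : ‖y - x₀‖ ^ 2 ≤ r ^ 2 := by gcongr
  calc barrier x₀ r σ l 0 y = (r ^ 2 - ‖y - x₀‖ ^ 2) ^ 2 := by simp [barrier]
    _ ≤ (r ^ 2) ^ 2 :=
        pow_le_pow_left₀ (sub_nonneg.2 hsq) (sub_le_self _ (by positivity)) 2
    _ = r ^ 4 := by ring

theorem mul_lt_sq_add_of_pos {A : ℝ} (hA : 0 < A) (m s : ℝ) : m * s < m ^ 2 / A * s ^ 2 + A := by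
  have hpos : 0 < ((m * s) ^ 2 + (m * s - A) ^ 2 + A ^ 2) / (2 * A) := by positivity
  have heq : m ^ 2 / A * s ^ 2 + A - m * s =
      ((m * s) ^ 2 + (m * s - A) ^ 2 + A ^ 2) / (2 * A) := by
    field_simp
    ring
  linarith

/-- In terms of `s = r² + σ t - |y - x₀|²` the inequality is `m s < (l - M) s² + 8 κ (r² + σ t)`,
where the last term is bounded below by `8 κ r² > 0`. -/
theorem exists_barrier_strict_subsolution (hκ : 0 < κ) (hr : 0 < r) (hσ : 0 ≤ σ) (M : ℝ)
    (x₀ : EuclideanSpace ℝ (Fin d)) :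
    ∃ l, ∀ t, 0 ≤ t → ∀ y, deriv (fun s => barrier x₀ r σ l s y) t <
      κ * laplacian (barrier x₀ r σ l t) y - M * barrier x₀ r σ l t y := by
  set m := 2 * σ + κ * (8 + 4 * d)
  refine ⟨M + m ^ 2 / (8 * κ * r ^ 2), fun t ht y => ?_⟩
  set l := M + m ^ 2 / (8 * κ * r ^ 2) with hl
  set s := r ^ 2 + σ * t - ‖y - x₀‖ ^ 2 with hs
  have hlap : laplacian (barrier x₀ r σ l t) y =
      exp (-l * t) * (8 * ‖y - x₀‖ ^ 2 - 4 * d * s) := laplacian_barrier t y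
  have hquad : m * s < m ^ 2 / (8 * κ * r ^ 2) * s ^ 2 + 8 * κ * r ^ 2 :=
    mul_lt_sq_add_of_pos (by positivity) m s
  have hgrowth : 0 ≤ 8 * κ * (σ * t) := by positivity
  have hnorm : ‖y - x₀‖ ^ 2 = r ^ 2 + σ * t - s := by rw [hs]; ring
  have hkey : 2 * σ * s - l * s ^ 2 < κ * (8 * ‖y - x₀‖ ^ 2 - 4 * d * s) - M * s ^ 2 := by
    rw [hnorm, hl]
    linarith
  calc deriv (fun s => barrier x₀ r σ l s y) t = exp (-l * t) * (2 * σ * s - l * s ^ 2) :=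
        (hasDerivAt_barrier t y).deriv
    _ < exp (-l * t) * (κ * (8 * ‖y - x₀‖ ^ 2 - 4 * d * s) - M * s ^ 2) :=
        mul_lt_mul_of_pos_left hkey (exp_pos _)
    _ = κ * laplacian (barrier x₀ r σ l t) y - M * barrier x₀ r σ l t y := by
        rw [hlap, barrier]
        ring

end Barrier

theorem exists_half_le_on_closedBall {X : Type*} [PseudoMetricSpace X] {f : X → ℝ} {x : X}
    (hf : ContinuousAt f x) (hpos : 0 < f x) {R : ℝ} (hR : 0 < R) :
    ∃ r > 0, r ≤ R ∧ ∀ y ∈ Metric.closedBall x r, f x / 2 ≤ f y := by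
  obtain ⟨η, hη, h⟩ := Metric.nhds_basis_closedBall.eventually_iff.1
    (hf.eventually (lt_mem_nhds (half_lt_self hpos)))
  exact ⟨min η R, lt_min hη hR, min_le_right η R, fun y hy =>
    (h (Metric.closedBall_subset_closedBall (min_le_left η R) hy)).le⟩

namespace IsSupersolution

variable {d : ℕ} {κ M a b : ℝ} {D : Set (EuclideanSpace ℝ (Fin d))}
  {w : ℝ → EuclideanSpace ℝ (Fin d) → ℝ} {x₀ x₁ : EuclideanSpace ℝ (Fin d)}

theorem le_of_strict_subsolution (hw : IsSupersolution κ a b D w fun t x => -M * w t x)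
    (hDopen : IsOpen D) (hκ : 0 ≤ κ) {K : Set (ℝ × EuclideanSpace ℝ (Fin d))} (hK : IsCompact K)
    (hKD : K ⊆ Icc a b ×ˢ D) {u : ℝ → EuclideanSpace ℝ (Fin d) → ℝ}
    (hu : ContinuousOn (fun p : ℝ × EuclideanSpace ℝ (Fin d) => u p.1 p.2) K)
    (hsub : ∀ t x, (t, x) ∈ K → w t x < u t x →
      a < t ∧ (t, x) ∈ parabolicInterior K ∧ ContDiffAt ℝ 2 (u t) x ∧
        ∃ v, HasDerivWithinAt (fun s => u s x) v (Iic t) t ∧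
          v < κ * laplacian (u t) x - M * u t x) :
    ∀ p ∈ K, u p.1 p.2 ≤ w p.1 p.2 := by
  suffices h : ∀ p ∈ K, 0 ≤ w p.1 p.2 - u p.1 p.2 from fun p hp => sub_nonneg.1 (h p hp)
  have hcont := (hw.continuousOn.mono fun p hp => ⟨(hKD hp).1, subset_closure (hKD hp).2⟩).sub hu
  refine parabolic_minimum_principle (z := fun t x => w t x - u t x) hK hκ (-M) hcont
    fun t x hp hneg _ => ?_
  obtain ⟨hat, hint, huC, u', hu', hlt⟩ := hsub t x hp (sub_neg.1 hneg)
  have ht : t ∈ Ioc a b := ⟨hat, (hKD hp).1.2⟩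
  have hwC : ContDiffAt ℝ 2 (w t) x := (hw.contDiffOn t ht).contDiffAt (hDopen.mem_nhds (hKD hp).2)
  obtain ⟨w', hw', hle⟩ := hw.exists_hasDerivWithinAt t ht x (hKD hp).2
  refine ⟨hint, hwC.sub huC, _, hw'.fun_sub hu', ?_⟩
  rw [laplacian_sub hwC huC]
  linarith

theorem barrier_le (hw : IsSupersolution κ a b D w fun t x => -M * w t x) (hDopen : IsOpen D)
    (hκ : 0 ≤ κ) (hnn : ∀ t ∈ Icc a b, ∀ x ∈ D, 0 ≤ w t x) {r σ l ε : ℝ} (hr : 0 ≤ r) (hσ : 0 ≤ σ)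
    (hε : 0 < ε) (hKD : expandingBall x₀ r σ a b ⊆ Icc a b ×ˢ D)
    (hsub : ∀ t, 0 ≤ t → ∀ y, deriv (fun s => barrier x₀ r σ l s y) t <
      κ * laplacian (barrier x₀ r σ l t) y - M * barrier x₀ r σ l t y)
    (hinit : ∀ y, ‖y - x₀‖ ≤ r → ε * barrier x₀ r σ l 0 y ≤ w a y) :
    ∀ p ∈ expandingBall x₀ r σ a b, ε * barrier x₀ r σ l (p.1 - a) p.2 ≤ w p.1 p.2 := by
  have hcont : Continuous fun p : ℝ × EuclideanSpace ℝ (Fin d) =>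
      ε * barrier x₀ r σ l (p.1 - a) p.2 :=
    continuous_const.mul (continuous_barrier.comp
      ((continuous_fst.sub continuous_const).prodMk continuous_snd))
  refine hw.le_of_strict_subsolution (u := fun t x => ε * barrier x₀ r σ l (t - a) x) hDopen hκ
    (isCompact_expandingBall hσ) hKD hcont.continuousOn fun t x ⟨ht, hx⟩ hneg => ?_
  have hat : a < t := by
    refine ht.1.lt_of_ne fun (h : a = t) => hneg.not_ge ?_
    subst h
    simpa using hinit x (le_of_sq_le_sq (by simpa using hx) hr)
  have hlt : ‖x - x₀‖ ^ 2 < r ^ 2 + σ * (t - a) := by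
    refine lt_of_le_of_ne hx fun h => hneg.not_ge ?_
    simpa [barrier, h] using hnn t ht x (hKD ⟨ht, hx⟩).2
  have hbC : ContDiffAt ℝ 2 (barrier x₀ r σ l (t - a)) x := (contDiff_barrier (t - a)).contDiffAt
  have hbt := (hasDerivAt_barrier (x₀ := x₀) (r := r) (σ := σ) (l := l) (t - a) x).differentiableAt
    |>.hasDerivAt.comp_sub_const t a |>.const_mul ε
  refine ⟨hat, mem_parabolicInterior_expandingBall hat ht.2 hlt, contDiffAt_const.mul hbC, _,
    hbt.hasDerivWithinAt, ?_⟩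
  rw [laplacian_const_mul ε hbC]
  linarith [mul_lt_mul_of_pos_left (hsub (t - a) (sub_nonneg.2 hat.le) x) hε]

theorem pos_of_mem_ball (hw : IsSupersolution κ a b D w fun t x => -M * w t x) (hDopen : IsOpen D)
    (hκ : 0 < κ) (hnn : ∀ t ∈ Icc a b, ∀ x ∈ D, 0 ≤ w t x) (hab : a < b) {R : ℝ}
    (hball : Metric.closedBall x₀ R ⊆ D) (hx₁ : x₁ ∈ Metric.ball x₀ R) (hpos : 0 < w a x₀) :
    0 < w b x₁ := by
  have hR : 0 < R := Metric.pos_of_mem_ball hx₁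
  have hcont : ContinuousAt (w a) x₀ :=
    (hw.continuousOn_slice (left_mem_Icc.2 hab.le)).continuousAt (mem_of_superset
      (hDopen.mem_nhds (hball (Metric.mem_closedBall_self hR.le))) subset_closure)
  obtain ⟨r, hr, hrR, hhalf⟩ := exists_half_le_on_closedBall hcont hpos hR
  set σ := (R ^ 2 - r ^ 2) / (b - a) with hσ_def
  have hσ : 0 ≤ σ := div_nonneg (sub_nonneg.2 (by gcongr)) (sub_nonneg.2 hab.le)
  have hσb : r ^ 2 + σ * (b - a) = R ^ 2 := by
    rw [hσ_def, div_mul_cancel₀ _ (sub_pos.2 hab).ne']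
    ring
  have hKD : expandingBall x₀ r σ a b ⊆ Icc a b ×ˢ D :=
    (expandingBall_subset hσ).trans (prod_mono_right (by rwa [hσb, sqrt_sq hR.le]))
  obtain ⟨l, hl⟩ := exists_barrier_strict_subsolution hκ hr hσ M x₀
  have hinit (y) (hy : ‖y - x₀‖ ≤ r) : w a x₀ / 2 / r ^ 4 * barrier x₀ r σ l 0 y ≤ w a y :=
    calc w a x₀ / 2 / r ^ 4 * barrier x₀ r σ l 0 y ≤ w a x₀ / 2 / r ^ 4 * r ^ 4 := by
          gcongr
          exact barrier_zero_le hy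
      _ = w a x₀ / 2 := div_mul_cancel₀ _ (by positivity)
      _ ≤ w a y := hhalf y (mem_closedBall_iff_norm.2 hy)
  have hx₁R : ‖x₁ - x₀‖ ^ 2 < r ^ 2 + σ * (b - a) := by
    rw [hσb]
    exact pow_lt_pow_left₀ (mem_ball_iff_norm.1 hx₁) (norm_nonneg _) two_ne_zero
  calc 0 < w a x₀ / 2 / r ^ 4 * barrier x₀ r σ l (b - a) x₁ :=
        mul_pos (by positivity) (mul_pos (exp_pos _) (pow_pos (sub_pos.2 hx₁R) 2))
    _ ≤ w b x₁ := hw.barrier_le hDopen hκ.le hnn hr.le hσ (by positivity) hKD hl hinit (b, x₁)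
        ⟨right_mem_Icc.2 hab.le, hx₁R.le⟩

theorem pos_of_exists_pos (hw : IsSupersolution κ a b D w fun t x => -M * w t x)
    (hDopen : IsOpen D) (hDconn : IsPreconnected D) (hκ : 0 < κ)
    (hnn : ∀ t ∈ Icc a b, ∀ x ∈ D, 0 ≤ w t x) (hpos : ∃ x ∈ D, 0 < w a x) :
    ∀ t ∈ Ioc a b, ∀ x ∈ D, 0 < w t x := by
  obtain ⟨x₀, hx₀, hpos⟩ := hpos
  let Spreads (x y : EuclideanSpace ℝ (Fin d)) : Prop :=
    ∀ s ∈ Icc a b, ∀ t ∈ Icc a b, s < t → 0 < w s x → 0 < w t y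
  have hball {x y : EuclideanSpace ℝ (Fin d)} {R : ℝ} (hball : Metric.closedBall x R ⊆ D)
      (hy : y ∈ Metric.ball x R) : Spreads x y := fun s hs t ht hst =>
    (hw.mono_time hs.1 ht.2).pos_of_mem_ball hDopen hκ
      (fun τ hτ => hnn τ ⟨hs.1.trans hτ.1, hτ.2.trans ht.2⟩) hst hball hy
  have hnear (x) (hx : x ∈ D) : ∀ᶠ y in 𝓝[D] x, Spreads x y ∧ Spreads y x := by
    obtain ⟨R, hR, hxR⟩ := Metric.nhds_basis_closedBall.mem_iff.1 (hDopen.mem_nhds hx)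
    filter_upwards [nhdsWithin_le_nhds (Metric.ball_mem_nhds x (half_pos hR))] with y hy
    have hyR : Metric.closedBall y (R / 2) ⊆ D :=
      (Metric.closedBall_subset_closedBall' (by linarith [Metric.mem_ball.1 hy])).trans hxR
    exact ⟨hball hxR (Metric.ball_subset_ball (half_le_self hR.le) hy),
      hball hyR (Metric.mem_ball_comm.1 hy)⟩
  have htrans (x y z) (hxy : Spreads x y) (hyz : Spreads y z) : Spreads x z := by
    intro s hs t ht hst hsx
    obtain ⟨τ, hsτ, hτt⟩ := exists_between hst
    have hτ : τ ∈ Icc a b := ⟨hs.1.trans hsτ.le, hτt.le.trans ht.2⟩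
    exact hyz τ hτ t ht hτt (hxy s hs τ hτ hsτ hsx)
  intro t ht x hx
  exact hDconn.induction₂' Spreads hnear (fun x y z _ _ _ => htrans x y z) hx₀ hx
    a ⟨le_rfl, ht.1.le.trans ht.2⟩ t (Ioc_subset_Icc_self ht) ht.1 hpos

end IsSupersolution

theorem statement1_general {d : ℕ} {a b : ℝ} {D : Set (EuclideanSpace ℝ (Fin d))}
    (hDopen : IsOpen D) (hDconn : IsPreconnected D) (hDbdd : Bornology.IsBounded D)
    {κ : ℝ} (hκ : 0 < κ) {w c : ℝ → EuclideanSpace ℝ (Fin d) → ℝ}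
    {k : ℝ → EuclideanSpace ℝ (Fin d) → EuclideanSpace ℝ (Fin d) → ℝ}
    (hw : IsSupersolution κ a b D w fun t x => c t x * w t x + ∫ y in D, k t x y * w t y)
    (hc : ∃ M, ∀ t ∈ Ioc a b, ∀ x ∈ D, |c t x| ≤ M) (hk : IsBoundedKernel a b D k)
    (hbdry : ∀ t ∈ Icc a b, ∀ x ∈ frontier D, 0 ≤ w t x)
    (hinit : ∀ x ∈ D, 0 ≤ w a x) (hinit_ne : ¬ ∀ x ∈ D, w a x = 0) :
    ∀ t ∈ Ioc a b, ∀ x ∈ D, 0 < w t x := by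
  obtain ⟨M, hM⟩ := hc
  have hnn := hw.nonneg_of_nonlocal hDopen hDbdd hκ.le
    ⟨M, fun t ht x hx => (abs_le.1 (hM t ht x hx)).2⟩ hk hbdry hinit
  have hlocal := hw.local_of_nonlocal hDopen.measurableSet
    (fun t ht x hx => (abs_le.1 (hM t ht x hx)).1) hk.nonneg
    fun t ht => hnn t (Ioc_subset_Icc_self ht)
  push Not at hinit_ne
  obtain ⟨x, hx, hne⟩ := hinit_ne
  exact hlocal.pos_of_exists_pos hDopen hDconn hκ hnn ⟨x, hx, (hinit x hx).lt_of_ne' hne⟩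

/-- Non-local parabolic comparison principle (Lemma 3.2, strict positivity part). -/
theorem statement1 {d : ℕ} (hd : 1 ≤ d) {T : ℝ} (hT : 0 < T)
    {D : Set (EuclideanSpace ℝ (Fin d))} (hDopen : IsOpen D) (hDconn : IsConnected D)
    (hDbdd : Bornology.IsBounded D)
    {d' : ℝ} (hd' : 0 < d')
    (w wt : ℝ → EuclideanSpace ℝ (Fin d) → ℝ)
    -- `w` is continuous on `[0,T] × D̄`
    (hw_cont : ContinuousOn (fun p : ℝ × EuclideanSpace ℝ (Fin d) => w p.1 p.2)
      (Icc 0 T ×ˢ closure D))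
    -- the time derivative `∂w/∂t = wt` exists on `(0,T] × D` and is continuous there
    (hw_t : ∀ t ∈ Ioc 0 T, ∀ x ∈ D, HasDerivAt (fun s => w s x) (wt t x) t)
    (hwt_cont : ContinuousOn (fun p : ℝ × EuclideanSpace ℝ (Fin d) => wt p.1 p.2)
      (Ioc 0 T ×ˢ D))
    -- `w(t, ·)` is twice continuously differentiable in `x` on `D`
    (hw_x : ∀ t ∈ Ioc 0 T, ContDiffOn ℝ 2 (w t) D)
    (c₁ c₂ c₃ c₄ : ℝ → EuclideanSpace ℝ (Fin d) → ℝ)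
    -- the coefficients are measurable on `(0,T] × D`
    (hc₁meas : Measurable ((Ioc 0 T ×ˢ D).restrict
      fun p : ℝ × EuclideanSpace ℝ (Fin d) => c₁ p.1 p.2))
    (hc₂meas : Measurable ((Ioc 0 T ×ˢ D).restrict
      fun p : ℝ × EuclideanSpace ℝ (Fin d) => c₂ p.1 p.2))
    (hc₃meas : Measurable ((Ioc 0 T ×ˢ D).restrict
      fun p : ℝ × EuclideanSpace ℝ (Fin d) => c₃ p.1 p.2))
    (hc₄meas : Measurable ((Ioc 0 T ×ˢ D).restrict
      fun p : ℝ × EuclideanSpace ℝ (Fin d) => c₄ p.1 p.2))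
    -- the coefficients are bounded on `(0,T] × D`
    (hc₁bdd : ∃ M, ∀ t ∈ Ioc 0 T, ∀ x ∈ D, |c₁ t x| ≤ M)
    (hc₂bdd : ∃ M, ∀ t ∈ Ioc 0 T, ∀ x ∈ D, |c₂ t x| ≤ M)
    (hc₃bdd : ∃ M, ∀ t ∈ Ioc 0 T, ∀ x ∈ D, |c₃ t x| ≤ M)
    (hc₄bdd : ∃ M, ∀ t ∈ Ioc 0 T, ∀ x ∈ D, |c₄ t x| ≤ M)
    -- `c₂, c₃, c₄ ≥ 0`
    (hc₂nn : ∀ t ∈ Ioc 0 T, ∀ x ∈ D, 0 ≤ c₂ t x)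
    (hc₃nn : ∀ t ∈ Ioc 0 T, ∀ x ∈ D, 0 ≤ c₃ t x)
    (hc₄nn : ∀ t ∈ Ioc 0 T, ∀ x ∈ D, 0 ≤ c₄ t x)
    -- (i) the differential inequality
    (hineq : ∀ t ∈ Ioc 0 T, ∀ x ∈ D,
      c₁ t x * w t x + c₃ t x * (∫ y in D, c₂ t y * w t y)
        + (∫ y in D, c₄ t y * w t y) ≤ wt t x - d' * laplacian (w t) x)
    -- (ii) boundary nonnegativity
    (hbdry : ∀ t ∈ Icc 0 T, ∀ x ∈ frontier D, 0 ≤ w t x)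
    -- (iii) initial nonnegativity
    (hinit : ∀ x ∈ D, 0 ≤ w 0 x)
    -- (iv) the initial datum is not identically zero on `D`
    (hinit_ne : ¬ ∀ x ∈ D, w 0 x = 0) :
    ∀ t ∈ Ioc 0 T, ∀ x ∈ D, 0 < w t x := by
  have hDmeas := hDopen.measurableSet
  have hDfin := hDbdd.measure_lt_top (μ := volume).ne
  have hc₂int := fun t (ht : t ∈ Ioc 0 T) =>
    integrableOn_section_of_bounded hDmeas hDfin hc₂meas hc₂bdd ht
  have hc₄int := fun t (ht : t ∈ Ioc 0 T) =>
    integrableOn_section_of_bounded hDmeas hDfin hc₄meas hc₄bdd ht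
  exact statement1_general hDopen hDconn.isPreconnected hDbdd hd'
    (isSupersolution_of_hasDerivAt hDopen hDbdd hw_cont hw_t hw_x hc₂int hc₄int hineq) hc₁bdd
    (isBoundedKernel_mul_add hDmeas hDfin hc₂int hc₄int hc₂bdd hc₃bdd hc₄bdd hc₂nn hc₃nn hc₄nn)
    hbdry hinit hinit_ne
end

section
/- Let T > 0, let D ⊂ ℝ^d (d ≥ 1) be a bounded open set, and let β : [0,T] → ℝ be a continuous function. Let k > 0, γ ≥ 0, δ ≥ 0, η ≥ 0 be constants and let p, q, n > 1 and m ≥ 0 be exponents. Let v : [0,T] × D̄ → ℝ be continuous and nonnegative, with ∂v/∂t continuous and v(t,·) twice continuously differentiable in x on (0,T] × D, satisfying for all (t,x) ∈ (0,T] × D: ∂v/∂t(t,x) = Δv(t,x) + γ·v(t,x) + e^{(q−1)ηβ(t)}·∫_D v(t,y)^q dy − k·e^{(p−1)ηβ(t)}·v(t,x)^p + δ·e^{(m+n−1)ηβ(t)}·v(t,x)^m·∫_D v(t,y)^n dy, with v(t,x) = 0 for x ∈ ∂D, t ∈ (0,T], and v(0,x) = f(x) for x ∈ D. Let V : [0,T]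 × D̄ → ℝ be continuous and strictly positive on (0,T] × D, with ∂V/∂t continuous and V(t,·) twice continuously differentiable in x on (0,T] × D, satisfying for all (t,x) ∈ (0,T] × D: ∂V/∂t(t,x) ≥ ΔV(t,x) + γ·V(t,x) + e^{(q−1)ηβ(t)}·∫_D V(t,y)^q dy − k·e^{(p−1)ηβ(t)}·V(t,x)^p + δ·e^{(m+n−1)ηβ(t)}·V(t,x)^m·∫_D V(t,y)^n dy, with V(t,x) ≥ 0 for x ∈ ∂D, t ∈ (0,T], and V(0,x) ≥ f(x) for x ∈ D. Then V(t,x) ≥ v(t,x) for all (t,x) ∈ [0,T] × D̄. -/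
open MeasureTheory Real Set

/-! Comparing `v` and `V` directly fails when `m < 1`, since `u ↦ u ^ m` is not Lipschitz at `0` and
`V` may vanish on `∂D`. Compare `v ^ θ` and `V ^ θ` with `0 < θ < 1` instead. At a positive maximum
`μ` of `v ^ θ - V ^ θ` (up to the usual factor `exp (-K t)`), the weighted equation for `u ^ θ` has
a favourable gradient term, and the weight `u ^ (θ - 1)`, which blows up as `u → 0`, makes the
source `∫ u ^ q` contribute a *negative* multiple of `μ / v`. For small `v` this dominates the
contributions `v ^ (θ - 1) μ` of the variation of the integrals. If `m < 1`, the remaining factor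
`u ^ (m + θ - 1)` is nonincreasing for `θ ≤ 1 - m`; if `m ≥ 1`, it is a Lipschitz function of
`u ^ θ` on bounded sets.

The argument needs `∫ V ^ q` to be bounded away from `0`, that is, `V (0, ·) ≢ 0`. If
`V (0, ·) ≡ 0`, then `v` also starts from `0`, and comparing it with the supersolutions
`ε exp (L t)`, which are positive initially, gives `v ≤ 0`.
-/

open Filter Topology

section RealPowers

theorem one_add_mul_sub_one_le_rpow {z s : ℝ} (hz : 0 < z) (hs : s ≤ 0 ∨ 1 ≤ s) :
    1 + s * (z - 1) ≤ z ^ s := by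
  rcases hs with hs | hs
  · rw [rpow_def_of_pos hz]
    nlinarith [add_one_le_exp (log z * s), log_le_sub_one_of_pos hz]
  · simpa using one_add_mul_self_le_rpow_one_add (s := z - 1) (by linarith) hs

/-- The tangent line inequality for the convex function `z ↦ z ^ (r / θ)`, with `z = u ^ θ`. -/
theorem rpow_sub_rpow_le_mul_rpow_sub_rpow {a b θ r : ℝ} (ha : 0 < a) (hb : 0 < b) (hθ : 0 < θ)
    (hr : r ≤ 0 ∨ θ ≤ r) :
    a ^ r - b ^ r ≤ r / θ * a ^ (r - θ) * (a ^ θ - b ^ θ) := by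
  have htangent : 1 + r / θ * ((b / a) ^ θ - 1) ≤ (b / a) ^ r := by
    have h := one_add_mul_sub_one_le_rpow (z := (b / a) ^ θ) (s := r / θ) (by positivity)
      (hr.imp (div_nonpos_of_nonpos_of_nonneg · hθ.le) (one_le_div hθ).2)
    rwa [← rpow_mul (by positivity), mul_div_cancel₀ _ hθ.ne'] at h
  have hsplit : a ^ r = a ^ (r - θ) * a ^ θ := by rw [← rpow_add ha, sub_add_cancel]
  rw [div_rpow hb.le ha.le, div_rpow hb.le ha.le, le_div_iff₀ (by positivity)] at htangent
  have hscaled : (1 + r / θ * (b ^ θ / a ^ θ - 1)) * a ^ r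
      = a ^ r - r / θ * a ^ (r - θ) * (a ^ θ - b ^ θ) := by
    rw [hsplit]
    field_simp
    ring
  linarith

theorem rpow_le_rpow_add_of_rpow_le_rpow_add {a b R μ θ r : ℝ} (hθ : 0 < θ) (hr : θ ≤ r)
    (ha : 0 ≤ a) (hb : 0 < b) (haR : a ≤ R) (hμ : 0 ≤ μ) (h : a ^ θ ≤ b ^ θ + μ) :
    a ^ r ≤ b ^ r + r / θ * R ^ (r - θ) * μ := by
  have hC : 0 ≤ r / θ * R ^ (r - θ) :=
    mul_nonneg (div_nonneg (hθ.le.trans hr) hθ.le) (rpow_nonneg (ha.trans haR) _)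
  rcases le_or_gt a b with hab | hab
  · exact (rpow_le_rpow ha hab (hθ.le.trans hr)).trans
      (le_add_of_nonneg_right (mul_nonneg hC hμ))
  · have hCa : r / θ * a ^ (r - θ) ≤ r / θ * R ^ (r - θ) := by
      have : 0 ≤ r / θ := div_nonneg (hθ.le.trans hr) hθ.le
      gcongr
    have hgap : 0 ≤ a ^ θ - b ^ θ := sub_nonneg.2 (rpow_le_rpow hb.le hab.le hθ.le)
    have htangent := rpow_sub_rpow_le_mul_rpow_sub_rpow (hb.trans hab) hb hθ (.inr hr)
    linarith [mul_le_mul hCa (by linarith : a ^ θ - b ^ θ ≤ μ) hgap hC]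

theorem exists_mul_rpow_sub_one_le {θ s : ℝ} (hθ : 0 < θ) (hθ' : θ ≤ 1) (hs : 0 < s) (C : ℝ) :
    ∃ K, ∀ a : ℝ, 0 < a → C * a ^ (θ - 1) ≤ s * a⁻¹ + K := by
  have hsmall : ∀ᶠ a in 𝓝 (0 : ℝ), C * a ^ θ < s := by
    have hcont : Continuous fun a : ℝ => C * a ^ θ :=
      continuous_const.mul (continuous_rpow_const hθ.le)
    exact hcont.continuousAt.eventually_lt_const (by simpa [zero_rpow hθ.ne'] using hs)
  obtain ⟨r, hr, hsmall⟩ := Metric.eventually_nhds_iff.1 hsmall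
  refine ⟨|C| * r ^ (θ - 1), fun a ha => ?_⟩
  rcases lt_or_ge a r with har | har
  · have hCa : C * a ^ θ ≤ s := (hsmall (by simpa [abs_of_pos ha] using har)).le
    calc C * a ^ (θ - 1) = C * a ^ θ * a⁻¹ := by rw [rpow_sub_one ha.ne']; ring
      _ ≤ s * a⁻¹ := by gcongr
      _ ≤ s * a⁻¹ + |C| * r ^ (θ - 1) := le_add_of_nonneg_right (by positivity)
  · calc C * a ^ (θ - 1) ≤ |C| * a ^ (θ - 1) := by gcongr; exact le_abs_self C
      _ ≤ |C| * r ^ (θ - 1) := by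
        gcongr |C| * ?_
        exact rpow_le_rpow_of_nonpos hr har (by linarith)
      _ ≤ s * a⁻¹ + |C| * r ^ (θ - 1) := le_add_of_nonneg_left (by positivity)

theorem exists_mul_rpow_sub_one_mul_gap_le {θ s : ℝ} (hθ : 0 < θ) (hθ' : θ < 1) (hs : 0 < s)
    (C : ℝ) :
    ∃ K, ∀ a b : ℝ, 0 < b → b < a →
      C * a ^ (θ - 1) * (a ^ θ - b ^ θ)
        ≤ s * (b ^ (θ - 1) - a ^ (θ - 1)) + K * (a ^ θ - b ^ θ) := by
  obtain ⟨K, hK⟩ := exists_mul_rpow_sub_one_le hθ hθ'.le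
    (mul_pos hs (div_pos (sub_pos.2 hθ') hθ)) C
  refine ⟨K, fun a b hb hba => ?_⟩
  have ha : 0 < a := hb.trans hba
  have hgap : 0 ≤ a ^ θ - b ^ θ := sub_nonneg.2 (rpow_le_rpow hb.le hba.le hθ.le)
  have htangent : (1 - θ) / θ * a⁻¹ * (a ^ θ - b ^ θ) ≤ b ^ (θ - 1) - a ^ (θ - 1) := by
    have h := rpow_sub_rpow_le_mul_rpow_sub_rpow (r := θ - 1) ha hb hθ (.inl (by linarith))
    rw [sub_sub_cancel_left, rpow_neg_one,
      show (θ - 1) / θ = -((1 - θ) / θ) by ring] at h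
    linarith
  linarith [mul_le_mul_of_nonneg_right (hK a ha) hgap, mul_le_mul_of_nonneg_left htangent hs.le]

theorem exists_exponent_rpow_sub_rpow_le {m : ℝ} (hm : 0 ≤ m) (R : ℝ) :
    ∃ θ C : ℝ, 0 < θ ∧ θ < 1 ∧ 0 ≤ C ∧ ∀ a b : ℝ, 0 < b → b < a → a ≤ R →
      a ^ (m + θ - 1) - b ^ (m + θ - 1) ≤ C * (a ^ θ - b ^ θ) := by
  rcases lt_or_ge m 1 with hm1 | hm1
  · refine ⟨(1 - m) / 2, 0, by linarith, by linarith, le_rfl, fun a b hb hba _ => ?_⟩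
    rw [zero_mul, sub_nonpos]
    exact rpow_le_rpow_of_nonpos hb hba.le (by linarith)
  · refine ⟨1 / 2, (m - 1 / 2) / (1 / 2) * |R| ^ (m - 1), by norm_num, by norm_num,
      mul_nonneg (by linarith) (by positivity), fun a b hb hba haR => ?_⟩
    have hgap : 0 ≤ a ^ (1 / 2 : ℝ) - b ^ (1 / 2 : ℝ) :=
      sub_nonneg.2 (rpow_le_rpow hb.le hba.le (by norm_num))
    have ha : a ^ (m - 1) ≤ |R| ^ (m - 1) :=
      rpow_le_rpow (hb.trans hba).le (haR.trans (le_abs_self R)) (by linarith)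
    have htangent := rpow_sub_rpow_le_mul_rpow_sub_rpow (θ := 1 / 2) (r := m + 1 / 2 - 1)
      (hb.trans hba) hb (by norm_num) (.inr (by linarith))
    rw [show m + 1 / 2 - 1 - 1 / 2 = m - 1 by ring] at htangent
    rw [show m + 1 / 2 - 1 = m - 1 / 2 by ring] at htangent ⊢
    refine htangent.trans ?_
    have : 0 ≤ (m - 1 / 2) / (1 / 2) := by linarith
    gcongr

end RealPowers

section WeightedGaps

variable {A B I J C θ : ℝ}

theorem rpow_weighted_source_gap_le {s : ℝ} (hB : 0 < B) (hBA : B ≤ A) (hθ : θ ≤ 1) (hs : s ≤ J)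
    (hI : I ≤ J + C * (A ^ θ - B ^ θ)) :
    A ^ (θ - 1) * I - B ^ (θ - 1) * J
      ≤ C * A ^ (θ - 1) * (A ^ θ - B ^ θ) - s * (B ^ (θ - 1) - A ^ (θ - 1)) := by
  have hweight : A ^ (θ - 1) ≤ B ^ (θ - 1) := rpow_le_rpow_of_nonpos hB hBA (by linarith)
  linarith [mul_le_mul_of_nonneg_left hI (rpow_nonneg (hB.le.trans hBA) (θ - 1)),
    mul_le_mul_of_nonneg_left hs (sub_nonneg.2 hweight)]

theorem rpow_weighted_coupling_gap_le {m R S C' : ℝ} (hB : 0 < B) (hBA : B ≤ A) (hAR : A ≤ R)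
    (hθ : 0 ≤ θ) (hm : 0 ≤ m) (hJ : 0 ≤ J) (hJS : J ≤ S) (hC : 0 ≤ C) (hC' : 0 ≤ C')
    (hI : I ≤ J + C * (A ^ θ - B ^ θ))
    (hpow : A ^ (m + θ - 1) - B ^ (m + θ - 1) ≤ C' * (A ^ θ - B ^ θ)) :
    A ^ (θ - 1) * (A ^ m * I) - B ^ (θ - 1) * (B ^ m * J)
      ≤ R ^ m * C * A ^ (θ - 1) * (A ^ θ - B ^ θ) + S * C' * (A ^ θ - B ^ θ) := by
  have hA : 0 < A := hB.trans_le hBA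
  have hgap : 0 ≤ A ^ θ - B ^ θ := sub_nonneg.2 (rpow_le_rpow hB.le hBA hθ)
  have hmerge : ∀ u : ℝ, 0 < u → u ^ (m + θ - 1) = u ^ m * u ^ (θ - 1) := fun u hu => by
    rw [add_sub_assoc, rpow_add hu]
  rw [hmerge A hA, hmerge B hB] at hpow
  have hint : A ^ (θ - 1) * A ^ m * I ≤ A ^ (θ - 1) * A ^ m * (J + C * (A ^ θ - B ^ θ)) := by
    gcongr
  have hAm : A ^ m * (C * A ^ (θ - 1) * (A ^ θ - B ^ θ))
      ≤ R ^ m * (C * A ^ (θ - 1) * (A ^ θ - B ^ θ)) := by gcongr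
  have hpowJ : J * (A ^ m * A ^ (θ - 1) - B ^ m * B ^ (θ - 1)) ≤ S * (C' * (A ^ θ - B ^ θ)) :=
    (mul_le_mul_of_nonneg_left hpow hJ).trans (by gcongr)
  linarith

theorem rpow_weighted_rpow_mono {p : ℝ} (hB : 0 < B) (hBA : B ≤ A) (hp : 1 ≤ p + θ) :
    B ^ (θ - 1) * B ^ p ≤ A ^ (θ - 1) * A ^ p := by
  rw [← rpow_add hB, ← rpow_add (hB.trans_le hBA)]
  exact rpow_le_rpow hB.le hBA (by linarith)

end WeightedGaps

section Integrals

variable {X : Type*} [TopologicalSpace X] [MeasurableSpace X] [OpensMeasurableSpace X]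
  {ν : Measure X} {s : Set X}

theorem setIntegral_pos_of_continuousOn [ν.IsOpenPosMeasure] (hs : IsOpen s) {g : X → ℝ}
    (hg : ContinuousOn g s) (hg_int : IntegrableOn g s ν) (hg_nn : ∀ x ∈ s, 0 ≤ g x)
    (hg_pos : ∃ x ∈ s, 0 < g x) : 0 < ∫ x in s, g x ∂ν := by
  obtain ⟨x, hx, hgx⟩ := hg_pos
  rw [setIntegral_pos_iff_support_of_nonneg_ae (ae_restrict_of_forall_mem hs.measurableSet hg_nn)
    hg_int]
  have hopen : IsOpen (s ∩ g ⁻¹' Ioi 0) := hg.isOpen_inter_preimage hs isOpen_Ioi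
  exact (hopen.measure_pos ν ⟨x, hx, hgx⟩).trans_le
    (measure_mono fun _ hy => ⟨(mem_Ioi.1 hy.2).ne', hy.1⟩)

variable [IsFiniteMeasureOnCompacts ν] {K : Set X}

theorem continuousOn_setIntegral_of_isCompact {Y : Type*} [TopologicalSpace Y]
    [FirstCountableTopology Y] {I : Set Y} {g : Y → X → ℝ} (hI : IsCompact I) (hK : IsCompact K)
    (hs : MeasurableSet s) (hsK : s ⊆ K)
    (hg : ContinuousOn (fun z : Y × X => g z.1 z.2) (I ×ˢ K)) :
    ContinuousOn (fun t => ∫ x in s, g t x ∂ν) I := by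
  obtain ⟨C, hC⟩ := (hI.prod hK).exists_bound_of_continuousOn hg
  have hsν : ν s ≠ ⊤ := measure_ne_top_of_subset hsK hK.measure_ne_top
  refine continuousOn_of_dominated (bound := fun _ => C) (fun t ht => ?_) (fun t ht => ?_)
    (integrableOn_const hsν) (ae_restrict_of_forall_mem hs fun x hx => ?_)
  · exact ((hg.comp (f := fun x => (t, x)) (by fun_prop) fun x hx => ⟨ht, hx⟩ :
      ContinuousOn (g t) K).integrableOn_of_subset_isCompact hK hs hsK hsν).aestronglyMeasurable
  · exact ae_restrict_of_forall_mem hs fun x hx => hC (t, x) ⟨ht, hsK hx⟩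
  · exact hg.comp (f := fun t => (t, x)) (by fun_prop) fun t ht => ⟨ht, hsK hx⟩

theorem integrableOn_rpow_of_continuousOn_isCompact {r : ℝ} {g : X → ℝ} (hr : 0 ≤ r)
    (hK : IsCompact K) (hs : MeasurableSet s) (hsK : s ⊆ K) (hg : ContinuousOn g K) :
    IntegrableOn (fun x => g x ^ r) s ν :=
  (hg.rpow_const fun _ _ => .inr hr).integrableOn_of_subset_isCompact hK hs hsK
    (measure_ne_top_of_subset hsK hK.measure_ne_top)

theorem setIntegral_rpow_le_add_of_rpow_le_add {g G : X → ℝ} {R μ θ r : ℝ} (hK : IsCompact K)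
    (hs : MeasurableSet s) (hsK : s ⊆ K) (hg : ContinuousOn g K) (hG : ContinuousOn G K)
    (hθ : 0 < θ) (hr : θ ≤ r) (hg_nn : ∀ x ∈ s, 0 ≤ g x) (hgR : ∀ x ∈ s, g x ≤ R)
    (hG_pos : ∀ x ∈ s, 0 < G x) (hμ : 0 ≤ μ) (h : ∀ x ∈ s, g x ^ θ ≤ G x ^ θ + μ) :
    ∫ x in s, g x ^ r ∂ν
      ≤ (∫ x in s, G x ^ r ∂ν) + ν.real s * (r / θ * R ^ (r - θ)) * μ := by
  have hg_int := integrableOn_rpow_of_continuousOn_isCompact (ν := ν) (hθ.le.trans hr) hK hs hsK hg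
  have hG_int := integrableOn_rpow_of_continuousOn_isCompact (ν := ν) (hθ.le.trans hr) hK hs hsK hG
  have hconst : IntegrableOn (fun _ : X => r / θ * R ^ (r - θ) * μ) s ν :=
    integrableOn_const (measure_ne_top_of_subset hsK hK.measure_ne_top)
  calc ∫ x in s, g x ^ r ∂ν ≤ ∫ x in s, (G x ^ r + r / θ * R ^ (r - θ) * μ) ∂ν :=
        setIntegral_mono_on hg_int (hG_int.add hconst) hs fun x hx =>
          rpow_le_rpow_add_of_rpow_le_rpow_add hθ hr (hg_nn x hx) (hG_pos x hx) (hgR x hx) hμ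
            (h x hx)
    _ = (∫ x in s, G x ^ r ∂ν) + ν.real s * (r / θ * R ^ (r - θ)) * μ := by
        rw [integral_add hG_int hconst, setIntegral_const, smul_eq_mul]
        ring

end Integrals

section MaximumPrinciple

theorem second_deriv_nonpos_of_isLocalMax {F F₁ : ℝ → ℝ} {c a : ℝ}
    (hF : ∀ᶠ s in 𝓝 a, HasDerivAt F (F₁ s) s) (hF₁ : HasDerivAt F₁ c a)
    (hmax : IsLocalMax F a) : c ≤ 0 := by
  by_contra! hc
  have hderiv : deriv F =ᶠ[𝓝 a] F₁ := hF.mono fun s hs => hs.deriv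
  have hderiv₂ : deriv (deriv F) a = c := by rw [hderiv.deriv_eq, hF₁.deriv]
  have hmin : IsLocalMin F a := isLocalMin_of_deriv_deriv_pos (hderiv₂ ▸ hc)
    hmax.deriv_eq_zero hF.self_of_nhds.continuousAt
  have hconst : F =ᶠ[𝓝 a] fun _ => F a := by
    filter_upwards [hmax, hmin] with s hle hge using le_antisymm hle hge
  have hderiv_zero : deriv F =ᶠ[𝓝 a] fun _ => 0 := by simpa using hconst.deriv
  rw [hderiv_zero.deriv_eq, deriv_const] at hderiv₂
  exact hc.ne hderiv₂

theorem hasDerivAt_deriv_rpow {g g₁ : ℝ → ℝ} {g₂ a θ : ℝ} (hg : HasDerivAt g (g₁ a) a)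
    (hg₁ : HasDerivAt g₁ g₂ a) (hga : 0 < g a) :
    HasDerivAt (fun s => g₁ s * θ * g s ^ (θ - 1))
      (θ * (g a ^ (θ - 1) * g₂ - (1 - θ) * (g₁ a * g a ^ (θ - 1)) ^ 2 * (g a ^ θ)⁻¹)) a := by
  have hpow : g a ^ (θ - 1 - 1) = (g a ^ (θ - 1)) ^ 2 * (g a ^ θ)⁻¹ := by
    rw [← rpow_neg hga.le, ← rpow_natCast, ← rpow_mul hga.le, ← rpow_add hga]
    congr 1
    push_cast
    ring
  refine ((hg₁.mul_const θ).mul (hg.rpow_const (p := θ - 1) (.inl hga.ne'))).congr_deriv ?_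
  rw [hpow]
  ring

theorem rpow_mul_second_deriv_le_of_isLocalMax {g g₁ G G₁ : ℝ → ℝ} {g₂ G₂ a θ : ℝ}
    (hθ : 0 < θ) (hθ' : θ ≤ 1)
    (hg : ∀ᶠ s in 𝓝 a, HasDerivAt g (g₁ s) s) (hg₁ : HasDerivAt g₁ g₂ a)
    (hG : ∀ᶠ s in 𝓝 a, HasDerivAt G (G₁ s) s) (hG₁ : HasDerivAt G₁ G₂ a)
    (hG_pos : 0 < G a) (hGg : G a ≤ g a)
    (hmax : IsLocalMax (fun s => g s ^ θ - G s ^ θ) a) :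
    g a ^ (θ - 1) * g₂ ≤ G a ^ (θ - 1) * G₂ := by
  have hg_pos : 0 < g a := hG_pos.trans_le hGg
  have hderiv : ∀ᶠ s in 𝓝 a, HasDerivAt (fun s => g s ^ θ - G s ^ θ)
      (g₁ s * θ * g s ^ (θ - 1) - G₁ s * θ * G s ^ (θ - 1)) s := by
    filter_upwards [hg, hG, hg.self_of_nhds.continuousAt.eventually_const_lt hg_pos,
      hG.self_of_nhds.continuousAt.eventually_const_lt hG_pos] with s hgs hGs hgs_pos hGs_pos
    exact (hgs.rpow_const (.inl hgs_pos.ne')).sub (hGs.rpow_const (.inl hGs_pos.ne'))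
  have hsecond := second_deriv_nonpos_of_isLocalMax hderiv
    ((hasDerivAt_deriv_rpow hg.self_of_nhds hg₁ hg_pos).sub
      (hasDerivAt_deriv_rpow hG.self_of_nhds hG₁ hG_pos)) hmax
  have hfirst : g₁ a * g a ^ (θ - 1) = G₁ a * G a ^ (θ - 1) :=
    mul_left_cancel₀ hθ.ne' (by linarith [hmax.hasDerivAt_eq_zero hderiv.self_of_nhds])
  have hinv : (g a ^ θ)⁻¹ ≤ (G a ^ θ)⁻¹ :=
    inv_anti₀ (rpow_pos_of_pos hG_pos _) (rpow_le_rpow hG_pos.le hGg hθ.le)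
  have hgradient : (1 - θ) * (G₁ a * G a ^ (θ - 1)) ^ 2 * (g a ^ θ)⁻¹
      ≤ (1 - θ) * (G₁ a * G a ^ (θ - 1)) ^ 2 * (G a ^ θ)⁻¹ :=
    mul_le_mul_of_nonneg_left hinv (mul_nonneg (by linarith) (sq_nonneg _))
  rw [hfirst, ← mul_sub] at hsecond
  linarith [nonpos_of_mul_nonpos_right hsecond hθ]

theorem mul_le_of_isMaxOn_exp_neg_mul {φ : ℝ → ℝ} {K c r t : ℝ} (hrt : r < t)
    (hφ : HasDerivAt φ c t) (hmax : IsMaxOn (fun s => exp (-K * s) * φ s) (Icc r t) t) :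
    K * φ t ≤ c := by
  have hexp : HasDerivAt (fun s => exp (-K * s)) (exp (-K * t) * -K) t := by
    simpa using ((hasDerivAt_id t).const_mul (-K)).exp
  have hcone : r - t ∈ posTangentConeAt (Icc r t) t :=
    sub_mem_posTangentConeAt_of_segment_subset (by rw [segment_symm, segment_eq_Icc hrt.le])
  have hle := hmax.localize.hasFDerivWithinAt_nonpos
    (hexp.mul hφ).hasFDerivAt.hasFDerivWithinAt hcone
  simp only [ContinuousLinearMap.toSpanSingleton_apply, smul_eq_mul] at hle
  have hderiv : 0 ≤ exp (-K * t) * (c - K * φ t) :=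
    nonneg_of_mul_nonpos_right (by linarith) (sub_neg.2 hrt)
  linarith [nonneg_of_mul_nonneg_right hderiv (exp_pos _)]

end MaximumPrinciple

section Laplacian

variable {E : Type*} [NormedAddCommGroup E] [NormedSpace ℝ E] {D : Set E} {u : E → ℝ} {x : E}

theorem hasDerivAt_add_smul (x e : E) (s : ℝ) : HasDerivAt (fun s : ℝ => x + s • e) e s := by
  simpa using ((hasDerivAt_id s).smul_const e).const_add x

theorem tendsto_add_smul_nhds (x e : E) : Tendsto (fun s : ℝ => x + s • e) (𝓝 0) (𝓝 x) := by
  simpa using (hasDerivAt_add_smul x e 0).continuousAt.tendsto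

theorem eventually_hasDerivAt_add_smul (hD : IsOpen D) (hu : DifferentiableOn ℝ u D) (hx : x ∈ D)
    (e : E) :
    ∀ᶠ s : ℝ in 𝓝 0, HasDerivAt (fun s : ℝ => u (x + s • e)) (fderiv ℝ u (x + s • e) e) s := by
  filter_upwards [(tendsto_add_smul_nhds x e).eventually (hD.mem_nhds hx)] with s hs
  exact (hu.differentiableAt (hD.mem_nhds hs)).hasFDerivAt.comp_hasDerivAt s
    (hasDerivAt_add_smul x e s)

theorem hasDerivAt_fderiv_add_smul (hD : IsOpen D) (hu : ContDiffOn ℝ 2 u D) (hx : x ∈ D) (e : E) :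
    HasDerivAt (fun s : ℝ => fderiv ℝ u (x + s • e) e)
      (fderiv ℝ (fun y => fderiv ℝ u y e) x e) 0 := by
  have hfderiv : DifferentiableAt ℝ (fderiv ℝ u) x :=
    ((hu.fderiv_of_isOpen hD (m := 1) (by norm_num)).differentiableOn
      (by norm_num)).differentiableAt (hD.mem_nhds hx)
  exact (hfderiv.clm_apply (differentiableAt_const e)).hasFDerivAt.comp_hasDerivAt_of_eq 0
    (hasDerivAt_add_smul x e 0) (by simp)

theorem rpow_mul_laplacian_le_of_isLocalMax {d : ℕ} {D : Set (EuclideanSpace ℝ (Fin d))}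
    {g G : EuclideanSpace ℝ (Fin d) → ℝ} {x : EuclideanSpace ℝ (Fin d)} {θ : ℝ} (hθ : 0 < θ)
    (hθ' : θ ≤ 1) (hD : IsOpen D) (hx : x ∈ D) (hg : ContDiffOn ℝ 2 g D)
    (hG : ContDiffOn ℝ 2 G D) (hG_pos : 0 < G x) (hGg : G x ≤ g x)
    (hmax : IsLocalMax (fun y => g y ^ θ - G y ^ θ) x) :
    g x ^ (θ - 1) * laplacian g x ≤ G x ^ (θ - 1) * laplacian G x := by
  unfold laplacian
  rw [Finset.mul_sum, Finset.mul_sum]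
  refine Finset.sum_le_sum fun i _ => ?_
  let e : EuclideanSpace ℝ (Fin d) := EuclideanSpace.single i 1
  have hmax_line : IsLocalMax (fun s : ℝ => g (x + s • e) ^ θ - G (x + s • e) ^ θ) 0 := by
    filter_upwards [(tendsto_add_smul_nhds x e).eventually hmax] with s hs
    simpa using hs
  simpa using rpow_mul_second_deriv_le_of_isLocalMax hθ hθ'
    (eventually_hasDerivAt_add_smul hD (hg.differentiableOn (by norm_num)) hx e)
    (hasDerivAt_fderiv_add_smul hD hg hx e)
    (eventually_hasDerivAt_add_smul hD (hG.differentiableOn (by norm_num)) hx e)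
    (hasDerivAt_fderiv_add_smul hD hG hx e) (by simpa using hG_pos) (by simpa using hGg) hmax_line

end Laplacian

section Cylinder

variable {X : Type*} [TopologicalSpace X] {D : Set X} {T : ℝ}

theorem closedCylinder_induction {P : ℝ → X → Prop} (hD : IsOpen D)
    (h_init : ∀ x ∈ closure D, P 0 x) (h_lateral : ∀ t ∈ Ioc 0 T, ∀ x ∈ frontier D, P t x)
    (h_interior : ∀ t ∈ Ioc 0 T, ∀ x ∈ D, P t x) : ∀ t ∈ Icc 0 T, ∀ x ∈ closure D, P t x := by
  intro t ht x hx
  rcases ht.1.eq_or_lt with rfl | ht_pos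
  · exact h_init x hx
  · by_cases hxD : x ∈ D
    · exact h_interior t ⟨ht_pos, ht.2⟩ x hxD
    · exact h_lateral t ⟨ht_pos, ht.2⟩ x (by rw [hD.frontier_eq]; exact ⟨hx, hxD⟩)

theorem exists_isMaxOn_interior_of_pos {w : ℝ × X → ℝ} (hD : IsOpen D)
    (hDc : IsCompact (closure D)) (hw : ContinuousOn w (Icc 0 T ×ˢ closure D))
    (h_init : ∀ x ∈ closure D, w (0, x) ≤ 0)
    (h_lateral : ∀ t ∈ Ioc 0 T, ∀ x ∈ frontier D, w (t, x) ≤ 0)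
    (h_pos : ∃ z ∈ Icc 0 T ×ˢ closure D, 0 < w z) :
    ∃ t ∈ Ioc 0 T, ∃ x ∈ D, 0 < w (t, x) ∧ IsMaxOn w (Icc 0 T ×ˢ closure D) (t, x) := by
  obtain ⟨z, hz, hwz⟩ := h_pos
  obtain ⟨⟨t, x⟩, ⟨ht, hx⟩, hmax⟩ := (isCompact_Icc.prod hDc).exists_isMaxOn ⟨z, hz⟩ hw
  have hw_max : 0 < w (t, x) := hwz.trans_le (hmax hz)
  by_contra! hcontra
  exact hw_max.not_ge (closedCylinder_induction (P := fun t x => IsMaxOn w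
    (Icc 0 T ×ˢ closure D) (t, x) → w (t, x) ≤ 0) hD (fun y hy _ => h_init y hy)
    (fun s hs y hy _ => h_lateral s hs y hy)
    (fun s hs y hy hmax => not_lt.1 fun hlt => hcontra s hs y hy hlt hmax) t ht x hx hmax)

end Cylinder

/-- The reaction term `γ u + a(t) ∫ u ^ q - b(t) u ^ p + c(t) u ^ m ∫ u ^ n` of the transformed
equation, with `growth`, `source`, `absorption` and `coupling` standing for `γ`, `a`, `b`, `c`. -/
structure NonlocalReaction where
  growth : ℝ
  source : ℝ → ℝ
  absorption : ℝ → ℝ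
  coupling : ℝ → ℝ
  p : ℝ
  q : ℝ
  n : ℝ
  m : ℝ

namespace NonlocalReaction

/-- The value at `x` of the reaction term at time `t` for the profile `u`, with integrals over
`D`. -/
noncomputable def eval {X : Type*} [MeasureSpace X] (N : NonlocalReaction) (D : Set X) (t : ℝ)
    (u : X → ℝ) (x : X) : ℝ :=
  N.growth * u x + N.source t * (∫ y in D, u y ^ N.q) - N.absorption t * u x ^ N.p
    + N.coupling t * u x ^ N.m * (∫ y in D, u y ^ N.n)

/-- The sign, continuity and exponent conditions on a reaction term, on the time interval `[0, T]`,
under which the comparison principle holds. -/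
structure IsAdmissible (N : NonlocalReaction) (T : ℝ) : Prop where
  source_cont : ContinuousOn N.source (Icc 0 T)
  source_pos : ∀ t ∈ Icc 0 T, 0 < N.source t
  absorption_nonneg : ∀ t ∈ Icc 0 T, 0 ≤ N.absorption t
  coupling_cont : ContinuousOn N.coupling (Icc 0 T)
  coupling_nonneg : ∀ t ∈ Icc 0 T, 0 ≤ N.coupling t
  one_le_p : 1 ≤ N.p
  one_le_q : 1 ≤ N.q
  one_le_n : 1 ≤ N.n
  m_nonneg : 0 ≤ N.m

end NonlocalReaction

section UniformBounds

theorem exists_nonneg_upper_bound_of_continuousOn {Y : Type*} [TopologicalSpace Y] {K : Set Y}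
    {w : Y → ℝ} (hK : IsCompact K) (hw : ContinuousOn w K) : ∃ M, 0 ≤ M ∧ ∀ y ∈ K, w y ≤ M := by
  obtain ⟨M, hM⟩ := hK.exists_bound_of_continuousOn hw
  exact ⟨max M 0, le_max_right _ _, fun y hy =>
    (le_abs_self _).trans ((hM y hy).trans (le_max_left _ _))⟩

variable {X : Type*} [TopologicalSpace X] [MeasureSpace X] [OpensMeasurableSpace X]
  [IsFiniteMeasureOnCompacts (volume : Measure X)] {D : Set X} {T : ℝ} {w : ℝ → ℝ}
  {v V : ℝ → X → ℝ}

theorem continuousOn_weighted_setIntegral_rpow {r : ℝ} (hD : MeasurableSet D)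
    (hDc : IsCompact (closure D)) (hw : ContinuousOn w (Icc 0 T))
    (hV : ContinuousOn (fun pr : ℝ × X => V pr.1 pr.2) (Icc 0 T ×ˢ closure D)) (hr : 0 ≤ r) :
    ContinuousOn (fun t => w t * ∫ y in D, V t y ^ r) (Icc 0 T) :=
  hw.mul (continuousOn_setIntegral_of_isCompact isCompact_Icc hDc hD subset_closure
    (hV.rpow_const fun _ _ => .inr hr))

theorem exists_pos_le_weighted_setIntegral_rpow [(volume : Measure X).IsOpenPosMeasure] {r : ℝ}
    (hD : IsOpen D) (hDc : IsCompact (closure D)) (hw : ContinuousOn w (Icc 0 T))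
    (hw_pos : ∀ t ∈ Icc 0 T, 0 < w t)
    (hV : ContinuousOn (fun pr : ℝ × X => V pr.1 pr.2) (Icc 0 T ×ˢ closure D))
    (hV_nn : ∀ t ∈ Icc 0 T, ∀ x ∈ D, 0 ≤ V t x) (hV_pos : ∀ t ∈ Icc 0 T, ∃ x ∈ D, 0 < V t x)
    (hr : 0 ≤ r) :
    ∃ s, 0 < s ∧ ∀ t ∈ Icc 0 T, s ≤ w t * ∫ y in D, V t y ^ r := by
  refine isCompact_Icc.exists_forall_le'
    (continuousOn_weighted_setIntegral_rpow hD.measurableSet hDc hw hV hr) fun t ht => ?_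
  have hVt : ContinuousOn (V t) (closure D) :=
    hV.comp (f := fun x => (t, x)) (by fun_prop) fun x hx => ⟨ht, hx⟩
  obtain ⟨x, hx, hVx⟩ := hV_pos t ht
  exact mul_pos (hw_pos t ht) (setIntegral_pos_of_continuousOn hD
    ((hVt.mono subset_closure).rpow_const fun _ _ => .inr hr)
    (integrableOn_rpow_of_continuousOn_isCompact hr hDc hD.measurableSet subset_closure hVt)
    (fun y hy => rpow_nonneg (hV_nn t ht y hy) r) ⟨x, hx, rpow_pos_of_pos hVx r⟩)

theorem exists_weighted_setIntegral_rpow_le {θ r : ℝ} (hD : MeasurableSet D)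
    (hDc : IsCompact (closure D)) (hw : ContinuousOn w (Icc 0 T))
    (hw_nn : ∀ t ∈ Icc 0 T, 0 ≤ w t)
    (hv : ContinuousOn (fun pr : ℝ × X => v pr.1 pr.2) (Icc 0 T ×ˢ closure D))
    (hv_nn : ∀ t ∈ Icc 0 T, ∀ x ∈ D, 0 ≤ v t x)
    (hV : ContinuousOn (fun pr : ℝ × X => V pr.1 pr.2) (Icc 0 T ×ˢ closure D))
    (hV_pos : ∀ t ∈ Ioc 0 T, ∀ x ∈ D, 0 < V t x) (hθ : 0 < θ) (hr : θ ≤ r) :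
    ∃ C, 0 ≤ C ∧ ∀ t ∈ Ioc 0 T, ∀ μ, 0 ≤ μ → (∀ y ∈ D, v t y ^ θ ≤ V t y ^ θ + μ) →
      w t * ∫ y in D, v t y ^ r ≤ w t * (∫ y in D, V t y ^ r) + C * μ := by
  obtain ⟨M, hM, hwM⟩ := exists_nonneg_upper_bound_of_continuousOn isCompact_Icc hw
  obtain ⟨R, hR, hvR⟩ := exists_nonneg_upper_bound_of_continuousOn (isCompact_Icc.prod hDc) hv
  have hC : 0 ≤ volume.real D * (r / θ * R ^ (r - θ)) := by
    have := hθ.le.trans hr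
    positivity
  refine ⟨M * (volume.real D * (r / θ * R ^ (r - θ))), mul_nonneg hM hC, fun t ht μ hμ h => ?_⟩
  have ht' : t ∈ Icc 0 T := Ioc_subset_Icc_self ht
  have hslice : MapsTo (fun x => (t, x)) (closure D) (Icc 0 T ×ˢ closure D) :=
    fun x hx => ⟨ht', hx⟩
  have hint := setIntegral_rpow_le_add_of_rpow_le_add (ν := volume) hDc hD subset_closure
    (hv.comp (f := fun x => (t, x)) (by fun_prop) hslice)
    (hV.comp (f := fun x => (t, x)) (by fun_prop) hslice) hθ hr (hv_nn t ht')
    (fun x hx => hvR (t, x) ⟨ht', subset_closure hx⟩) (hV_pos t ht) hμ h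
  calc w t * ∫ y in D, v t y ^ r
      ≤ w t * ((∫ y in D, V t y ^ r) + volume.real D * (r / θ * R ^ (r - θ)) * μ) :=
        mul_le_mul_of_nonneg_left hint (hw_nn t ht')
    _ = w t * (∫ y in D, V t y ^ r) + w t * (volume.real D * (r / θ * R ^ (r - θ)) * μ) :=
        mul_add _ _ _
    _ ≤ w t * (∫ y in D, V t y ^ r) + M * (volume.real D * (r / θ * R ^ (r - θ)) * μ) := by
        gcongr
        exact hwM t ht'
    _ = _ := by ring

end UniformBounds

namespace NonlocalReaction

section Gap

variable {X : Type*} [MeasureSpace X] {N : NonlocalReaction} {D : Set X} {T : ℝ}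

theorem rpow_mul_eval {u : X → ℝ} {x : X} (θ t : ℝ) (hu : 0 < u x) :
    u x ^ (θ - 1) * N.eval D t u x
      = N.growth * u x ^ θ + u x ^ (θ - 1) * (N.source t * ∫ y in D, u y ^ N.q)
        - N.absorption t * (u x ^ (θ - 1) * u x ^ N.p)
        + u x ^ (θ - 1) * (u x ^ N.m * (N.coupling t * ∫ y in D, u y ^ N.n)) := by
  have hpow : u x ^ θ = u x ^ (θ - 1) * u x := by rw [← rpow_add_one hu.ne', sub_add_cancel]
  rw [eval, hpow]
  ring

variable [TopologicalSpace X] [OpensMeasurableSpace X]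
  [IsFiniteMeasureOnCompacts (volume : Measure X)] [(volume : Measure X).IsOpenPosMeasure]

theorem IsAdmissible.exists_eval_gap_le {v V : ℝ → X → ℝ} (hN : N.IsAdmissible T) (hD : IsOpen D)
    (hDc : IsCompact (closure D))
    (hv : ContinuousOn (fun pr : ℝ × X => v pr.1 pr.2) (Icc 0 T ×ˢ closure D))
    (hv_nn : ∀ t ∈ Icc 0 T, ∀ x ∈ D, 0 ≤ v t x)
    (hV : ContinuousOn (fun pr : ℝ × X => V pr.1 pr.2) (Icc 0 T ×ˢ closure D))
    (hV_nn : ∀ t ∈ Icc 0 T, ∀ x ∈ D, 0 ≤ V t x) (hV_pos : ∀ t ∈ Ioc 0 T, ∀ x ∈ D, 0 < V t x)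
    (hV_init : ∃ x ∈ D, 0 < V 0 x) :
    ∃ θ K : ℝ, 0 < θ ∧ θ < 1 ∧ ∀ t ∈ Ioc 0 T, ∀ x ∈ D, V t x < v t x →
      (∀ y ∈ D, v t y ^ θ ≤ V t y ^ θ + (v t x ^ θ - V t x ^ θ)) →
      v t x ^ (θ - 1) * N.eval D t (v t) x - V t x ^ (θ - 1) * N.eval D t (V t) x
        ≤ K * (v t x ^ θ - V t x ^ θ) := by
  obtain ⟨R, -, hvR⟩ := exists_nonneg_upper_bound_of_continuousOn (isCompact_Icc.prod hDc) hv
  obtain ⟨θ, C, hθ, hθ', hC, hpow⟩ := exists_exponent_rpow_sub_rpow_le hN.m_nonneg R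
  obtain ⟨Cq, -, hq⟩ := exists_weighted_setIntegral_rpow_le hD.measurableSet hDc hN.source_cont
    (fun t ht => (hN.source_pos t ht).le) hv hv_nn hV hV_pos hθ (hθ'.le.trans hN.one_le_q)
  obtain ⟨Cn, hCn, hn⟩ := exists_weighted_setIntegral_rpow_le hD.measurableSet hDc
    hN.coupling_cont hN.coupling_nonneg hv hv_nn hV hV_pos hθ (hθ'.le.trans hN.one_le_n)
  have hV_pos' : ∀ t ∈ Icc 0 T, ∃ x ∈ D, 0 < V t x := fun t ht =>
    ht.1.eq_or_lt.elim (fun h => h ▸ hV_init) fun ht_pos =>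
      hV_init.imp fun x hx => ⟨hx.1, hV_pos t ⟨ht_pos, ht.2⟩ x hx.1⟩
  obtain ⟨s, hs, hsource⟩ := exists_pos_le_weighted_setIntegral_rpow hD hDc hN.source_cont
    hN.source_pos hV hV_nn hV_pos' (zero_le_one.trans hN.one_le_q)
  obtain ⟨S, -, hcoupling⟩ := exists_nonneg_upper_bound_of_continuousOn isCompact_Icc
    (continuousOn_weighted_setIntegral_rpow hD.measurableSet hDc hN.coupling_cont hV
      (zero_le_one.trans hN.one_le_n))
  obtain ⟨K, hK⟩ := exists_mul_rpow_sub_one_mul_gap_le hθ hθ' hs (Cq + R ^ N.m * Cn)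
  refine ⟨θ, N.growth + K + S * C, hθ, hθ', fun t ht x hx hlt hle => ?_⟩
  have ht' := Ioc_subset_Icc_self ht
  have hB := hV_pos t ht x hx
  have hgap : 0 ≤ v t x ^ θ - V t x ^ θ := sub_nonneg.2 (rpow_le_rpow hB.le hlt.le hθ.le)
  have hvx : v t x ≤ R := hvR (t, x) ⟨ht', subset_closure hx⟩
  have hsource_gap := rpow_weighted_source_gap_le hB hlt.le hθ'.le (hsource t ht')
    (hq t ht _ hgap hle)
  have hcoupling_gap := rpow_weighted_coupling_gap_le hB hlt.le hvx hθ.le hN.m_nonneg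
    (mul_nonneg (hN.coupling_nonneg t ht') (setIntegral_nonneg hD.measurableSet
      fun y hy => rpow_nonneg (hV_nn t ht' y hy) _))
    (hcoupling t ht') hCn hC (hn t ht _ hgap hle) (hpow _ _ hB hlt hvx)
  have habsorption := mul_le_mul_of_nonneg_left
    (rpow_weighted_rpow_mono (θ := θ) (p := N.p) hB hlt.le (by linarith [hN.one_le_p]))
    (hN.absorption_nonneg t ht')
  rw [rpow_mul_eval θ t (hB.trans hlt), rpow_mul_eval θ t hB]
  linarith [hK _ _ hB hlt]

end Gap

end NonlocalReaction

section Comparison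

variable {d : ℕ} {T : ℝ} {D : Set (EuclideanSpace ℝ (Fin d))} {N : NonlocalReaction}
  {u ut v vt V Vt : ℝ → EuclideanSpace ℝ (Fin d) → ℝ}

/-- Classical regularity on the cylinder `[0, T] × D̄`: `u` is continuous there, and on `(0, T] × D`
it has time derivative `ut` and is `C²` in space. -/
structure IsClassicalOn (T : ℝ) (D : Set (EuclideanSpace ℝ (Fin d)))
    (u ut : ℝ → EuclideanSpace ℝ (Fin d) → ℝ) : Prop where
  continuousOn : ContinuousOn (fun pr : ℝ × EuclideanSpace ℝ (Fin d) => u pr.1 pr.2)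
    (Icc 0 T ×ˢ closure D)
  hasDerivAt : ∀ t ∈ Ioc 0 T, ∀ x ∈ D, HasDerivAt (fun s => u s x) (ut t x) t
  contDiffOn : ∀ t ∈ Ioc 0 T, ContDiffOn ℝ 2 (u t) D

/-- Classical subsolutions of `∂u/∂t = Δu + N(t, u)` on `(0, T] × D`, without boundary or initial
conditions. -/
structure IsSubsolution (N : NonlocalReaction) (T : ℝ) (D : Set (EuclideanSpace ℝ (Fin d)))
    (u ut : ℝ → EuclideanSpace ℝ (Fin d) → ℝ) : Prop extends IsClassicalOn T D u ut where
  deriv_le : ∀ t ∈ Ioc 0 T, ∀ x ∈ D, ut t x ≤ laplacian (u t) x + N.eval D t (u t) x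

/-- Classical supersolutions of `∂u/∂t = Δu + N(t, u)` on `(0, T] × D`, without boundary or initial
conditions. -/
structure IsSupersolution_s2 (N : NonlocalReaction) (T : ℝ) (D : Set (EuclideanSpace ℝ (Fin d)))
    (u ut : ℝ → EuclideanSpace ℝ (Fin d) → ℝ) : Prop extends IsClassicalOn T D u ut where
  le_deriv : ∀ t ∈ Ioc 0 T, ∀ x ∈ D, laplacian (u t) x + N.eval D t (u t) x ≤ ut t x

theorem IsClassicalOn.continuousOn_slice (hu : IsClassicalOn T D u ut) {t : ℝ}
    (ht : t ∈ Icc 0 T) : ContinuousOn (u t) (closure D) :=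
  hu.continuousOn.comp (f := fun x => (t, x)) (by fun_prop) fun _ hx => ⟨ht, hx⟩

theorem mul_rpow_gap_le_eval_gap_of_isMaxOn {θ K t : ℝ} {x : EuclideanSpace ℝ (Fin d)}
    (hD : IsOpen D) (hv : IsSubsolution N T D v vt) (hV : IsSupersolution_s2 N T D V Vt)
    (hθ : 0 < θ) (hθ' : θ ≤ 1) (ht : t ∈ Ioc 0 T) (hx : x ∈ D) (hV_pos : 0 < V t x)
    (hVv : V t x ≤ v t x)
    (hmax : IsMaxOn (fun z : ℝ × EuclideanSpace ℝ (Fin d) =>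
      exp (-K * z.1) * (v z.1 z.2 ^ θ - V z.1 z.2 ^ θ)) (Icc 0 T ×ˢ closure D) (t, x)) :
    K * (v t x ^ θ - V t x ^ θ)
      ≤ θ * (v t x ^ (θ - 1) * N.eval D t (v t) x - V t x ^ (θ - 1) * N.eval D t (V t) x) := by
  have hv_pos : 0 < v t x := hV_pos.trans_le hVv
  have hspace : IsLocalMax (fun y => v t y ^ θ - V t y ^ θ) x := by
    filter_upwards [hD.mem_nhds hx] with y hy
    exact le_of_mul_le_mul_left
      (hmax (show (t, y) ∈ _ from ⟨Ioc_subset_Icc_self ht, subset_closure hy⟩)) (exp_pos _)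
  have htime := mul_le_of_isMaxOn_exp_neg_mul ht.1
    (((hv.hasDerivAt t ht x hx).rpow_const (p := θ) (.inl hv_pos.ne')).sub
      ((hV.hasDerivAt t ht x hx).rpow_const (p := θ) (.inl hV_pos.ne')))
    fun s hs => hmax (show (s, x) ∈ _ from ⟨⟨hs.1, hs.2.trans ht.2⟩, subset_closure hx⟩)
  have hlaplacian := rpow_mul_laplacian_le_of_isLocalMax hθ hθ' hD hx (hv.contDiffOn t ht)
    (hV.contDiffOn t ht) hV_pos hVv hspace
  have hv_eq := mul_le_mul_of_nonneg_left (hv.deriv_le t ht x hx) (rpow_nonneg hv_pos.le (θ - 1))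
  have hV_eq := mul_le_mul_of_nonneg_left (hV.le_deriv t ht x hx) (rpow_nonneg hV_pos.le (θ - 1))
  calc K * (v t x ^ θ - V t x ^ θ)
      ≤ θ * (v t x ^ (θ - 1) * vt t x - V t x ^ (θ - 1) * Vt t x) := by
        refine htime.trans_eq ?_
        ring
    _ ≤ θ * (v t x ^ (θ - 1) * N.eval D t (v t) x - V t x ^ (θ - 1) * N.eval D t (V t) x) :=
        mul_le_mul_of_nonneg_left (by linarith) hθ.le

theorem IsSubsolution.le_of_exists_init_pos (hN : N.IsAdmissible T) (hD : IsOpen D)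
    (hDb : Bornology.IsBounded D) (hv : IsSubsolution N T D v vt)
    (hv_nn : ∀ t ∈ Icc 0 T, ∀ x ∈ closure D, 0 ≤ v t x) (hV : IsSupersolution_s2 N T D V Vt)
    (hV_pos : ∀ t ∈ Ioc 0 T, ∀ x ∈ D, 0 < V t x)
    (h_lateral : ∀ t ∈ Ioc 0 T, ∀ x ∈ frontier D, v t x ≤ V t x)
    (h_init : ∀ x ∈ closure D, v 0 x ≤ V 0 x) (hV_init : ∃ x ∈ D, 0 < V 0 x) :
    ∀ t ∈ Icc 0 T, ∀ x ∈ closure D, v t x ≤ V t x := by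
  by_contra! hlt
  obtain ⟨t₁, ht₁, x₁, hx₁, hlt⟩ := hlt
  have hV_nn : ∀ t ∈ Icc 0 T, ∀ x ∈ closure D, 0 ≤ V t x :=
    closedCylinder_induction hD
      (fun x hx => (hv_nn 0 ⟨le_rfl, ht₁.1.trans ht₁.2⟩ x hx).trans (h_init x hx))
      (fun t ht x hx => (hv_nn t (Ioc_subset_Icc_self ht) x (frontier_subset_closure hx)).trans
        (h_lateral t ht x hx))
      fun t ht x hx => (hV_pos t ht x hx).le
  obtain ⟨θ, K, hθ, hθ', hgap⟩ := hN.exists_eval_gap_le hD hDb.isCompact_closure hv.continuousOn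
    (fun t ht x hx => hv_nn t ht x (subset_closure hx)) hV.continuousOn
    (fun t ht x hx => hV_nn t ht x (subset_closure hx)) hV_pos hV_init
  let w : ℝ × EuclideanSpace ℝ (Fin d) → ℝ := fun z =>
    exp (-(θ * K + 1) * z.1) * (v z.1 z.2 ^ θ - V z.1 z.2 ^ θ)
  have hw : ContinuousOn w (Icc 0 T ×ˢ closure D) :=
    ContinuousOn.mul (by fun_prop) ((hv.continuousOn.rpow_const fun _ _ => .inr hθ.le).sub
      (hV.continuousOn.rpow_const fun _ _ => .inr hθ.le))
  have hw_nonpos : ∀ t x, 0 ≤ v t x → v t x ≤ V t x → w (t, x) ≤ 0 := fun t x hnn hle =>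
    mul_nonpos_of_nonneg_of_nonpos (exp_pos _).le (sub_nonpos.2 (rpow_le_rpow hnn hle hθ.le))
  have hw_pos : 0 < w (t₁, x₁) :=
    mul_pos (exp_pos _) (sub_pos.2 (rpow_lt_rpow (hV_nn t₁ ht₁ x₁ hx₁) hlt hθ))
  obtain ⟨t, ht, x, hx, hpos, hmax⟩ := exists_isMaxOn_interior_of_pos hD hDb.isCompact_closure hw
    (fun x hx => hw_nonpos 0 x (hv_nn 0 ⟨le_rfl, ht₁.1.trans ht₁.2⟩ x hx) (h_init x hx))
    (fun t ht x hx => hw_nonpos t x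
      (hv_nn t (Ioc_subset_Icc_self ht) x (frontier_subset_closure hx)) (h_lateral t ht x hx))
    ⟨(t₁, x₁), ⟨ht₁, hx₁⟩, hw_pos⟩
  have ht' := Ioc_subset_Icc_self ht
  have hVv : V t x < v t x := not_le.1 fun hle =>
    hpos.not_ge (hw_nonpos t x (hv_nn t ht' x (subset_closure hx)) hle)
  have hslice : ∀ y ∈ D, v t y ^ θ - V t y ^ θ ≤ v t x ^ θ - V t x ^ θ := fun y hy =>
    le_of_mul_le_mul_left (hmax (show (t, y) ∈ _ from ⟨ht', subset_closure hy⟩)) (exp_pos _)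
  have hcontact := mul_rpow_gap_le_eval_gap_of_isMaxOn hD hv hV hθ hθ'.le ht hx
    (hV_pos t ht x hx) hVv.le hmax
  have hreaction := hgap t ht x hx hVv fun y hy => by linarith [hslice y hy]
  linarith [pos_of_mul_pos_right hpos (exp_pos _).le, mul_le_mul_of_nonneg_left hreaction hθ.le]

theorem NonlocalReaction.IsAdmissible.exists_eval_const_le {X : Type*} [MeasureSpace X]
    (hN : N.IsAdmissible T) (D : Set X) :
    ∃ L, 0 ≤ L ∧ ∀ t ∈ Icc 0 T, ∀ c ∈ Ioc (0 : ℝ) 1, ∀ x, N.eval D t (fun _ => c) x ≤ L * c := by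
  obtain ⟨M, hM, hsource⟩ :=
    exists_nonneg_upper_bound_of_continuousOn isCompact_Icc hN.source_cont
  obtain ⟨M', hM', hcoupling⟩ :=
    exists_nonneg_upper_bound_of_continuousOn isCompact_Icc hN.coupling_cont
  refine ⟨|N.growth| + M * volume.real D + M' * volume.real D, by positivity,
    fun t ht c hc x => ?_⟩
  have hpow_le : ∀ r : ℝ, 1 ≤ r → c ^ r ≤ c := fun r hr => rpow_le_self_of_le_one hc.1.le hc.2 hr
  have hc_nn : ∀ r : ℝ, 0 ≤ c ^ r := fun r => rpow_nonneg hc.1.le r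
  have hgrowth : N.growth * c ≤ |N.growth| * c := by
    have := hc.1.le
    gcongr
    exact le_abs_self _
  have hsource_le : N.source t * (volume.real D * c ^ N.q) ≤ M * (volume.real D * c) := by
    have := hc_nn N.q
    gcongr
    exacts [hsource t ht, hpow_le _ hN.one_le_q]
  have hcoupling_le : N.coupling t * c ^ N.m * (volume.real D * c ^ N.n)
      ≤ M' * 1 * (volume.real D * c) := by
    have := hc_nn N.n
    have := hc_nn N.m
    gcongr
    exacts [hcoupling t ht, rpow_le_one hc.1.le hc.2 hN.m_nonneg, hpow_le _ hN.one_le_n]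
  have habsorption := mul_nonneg (hN.absorption_nonneg t ht) (hc_nn N.p)
  simp only [NonlocalReaction.eval, setIntegral_const, smul_eq_mul]
  linarith

theorem NonlocalReaction.IsAdmissible.exists_isSupersolution_exp (hN : N.IsAdmissible T) :
    ∃ L, ∀ ε : ℝ, 0 < ε → ε * exp (L * T) ≤ 1 →
      IsSupersolution_s2 N T D (fun t _ => ε * exp (L * t)) (fun t _ => ε * exp (L * t) * L) := by
  obtain ⟨L, hL, heval⟩ := hN.exists_eval_const_le D
  refine ⟨L, fun ε hε hε' => ⟨⟨by fun_prop, fun t _ x _ => ?_, fun t _ => contDiffOn_const⟩,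
    fun t ht x _ => ?_⟩⟩
  · simpa [mul_assoc] using (((hasDerivAt_id t).const_mul L).exp.const_mul ε)
  · have hle : ε * exp (L * t) ≤ 1 := le_trans (by have := ht.2; gcongr) hε'
    have := heval t (Ioc_subset_Icc_self ht) _ ⟨by positivity, hle⟩ x
    simpa [laplacian, mul_comm] using this

theorem IsSubsolution.nonpos_of_init_nonpos (hN : N.IsAdmissible T) (hD : IsOpen D)
    (hDb : Bornology.IsBounded D) (hv : IsSubsolution N T D v vt)
    (hv_nn : ∀ t ∈ Icc 0 T, ∀ x ∈ closure D, 0 ≤ v t x)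
    (hv_lateral : ∀ t ∈ Ioc 0 T, ∀ x ∈ frontier D, v t x ≤ 0)
    (hv_init : ∀ x ∈ closure D, v 0 x ≤ 0) : ∀ t ∈ Icc 0 T, ∀ x ∈ closure D, v t x ≤ 0 := by
  intro t ht x hx
  obtain ⟨x₀, hx₀⟩ := closure_nonempty_iff.1 ⟨x, hx⟩
  obtain ⟨L, hsuper⟩ := hN.exists_isSupersolution_exp (D := D)
  have hsmall : ∀ᶠ ε in 𝓝[>] (0 : ℝ), v t x ≤ ε * exp (L * t) := by
    filter_upwards [Ioo_mem_nhdsGT (exp_pos (-(L * T)))] with ε hε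
    have hε' : ε * exp (L * T) ≤ 1 := by
      rw [← le_div_iff₀ (exp_pos _), one_div, ← exp_neg]
      exact hε.2.le
    have hpos : ∀ s, 0 < ε * exp (L * s) := fun s => mul_pos hε.1 (exp_pos _)
    exact hv.le_of_exists_init_pos hN hD hDb hv_nn (hsuper ε hε.1 hε') (fun s _ _ _ => hpos s)
      (fun s hs y hy => (hv_lateral s hs y hy).trans (hpos s).le)
      (fun y hy => (hv_init y hy).trans (hpos 0).le) ⟨x₀, hx₀, hpos 0⟩ t ht x hx
  have hlim : Tendsto (fun ε => ε * exp (L * t)) (𝓝[>] 0) (𝓝 0) := by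
    have : Continuous fun ε => ε * exp (L * t) := by fun_prop
    simpa using (this.tendsto 0).mono_left nhdsWithin_le_nhds
  exact ge_of_tendsto hlim hsmall

theorem statement2_general (hN : N.IsAdmissible T) (hD : IsOpen D) (hDb : Bornology.IsBounded D)
    (hv : IsSubsolution N T D v vt) (hv_nn : ∀ t ∈ Icc 0 T, ∀ x ∈ closure D, 0 ≤ v t x)
    (hv_lateral : ∀ t ∈ Ioc 0 T, ∀ x ∈ frontier D, v t x ≤ 0)
    (hV : IsSupersolution_s2 N T D V Vt) (hV_pos : ∀ t ∈ Ioc 0 T, ∀ x ∈ D, 0 < V t x)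
    (hV_lateral : ∀ t ∈ Ioc 0 T, ∀ x ∈ frontier D, 0 ≤ V t x)
    (h_init : ∀ x ∈ D, v 0 x ≤ V 0 x) : ∀ t ∈ Icc 0 T, ∀ x ∈ closure D, v t x ≤ V t x := by
  intro t ht
  have h0 : (0 : ℝ) ∈ Icc 0 T := ⟨le_rfl, ht.1.trans ht.2⟩
  have h_init' : ∀ x ∈ closure D, v 0 x ≤ V 0 x := fun x hx =>
    le_on_closure h_init (hv.continuousOn_slice h0) (hV.continuousOn_slice h0) hx
  by_cases hV_init : ∃ x ∈ D, 0 < V 0 x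
  · exact hv.le_of_exists_init_pos hN hD hDb hv_nn hV hV_pos
      (fun s hs x hx => (hv_lateral s hs x hx).trans (hV_lateral s hs x hx)) h_init' hV_init t ht
  · push Not at hV_init
    have hv_init : ∀ x ∈ closure D, v 0 x ≤ 0 := fun x hx =>
      le_on_closure (fun y hy => (h_init y hy).trans (hV_init y hy)) (hv.continuousOn_slice h0)
        continuousOn_const hx
    have hv_nonpos := hv.nonpos_of_init_nonpos hN hD hDb hv_nn hv_lateral hv_init
    refine closedCylinder_induction hD h_init' (fun s hs x hx =>
      (hv_lateral s hs x hx).trans (hV_lateral s hs x hx)) (fun s hs x hx =>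
      (hv_nonpos s (Ioc_subset_Icc_self hs) x (subset_closure hx)).trans (hV_pos s hs x hx).le) t ht

end Comparison

/-- The reaction term of the random equation satisfied by `v(t) = e^{-ηB(t)} u(t)`, for the path
`β` of `B`. -/
noncomputable def transformedReaction (γ k δ η p q n m : ℝ) (β : ℝ → ℝ) : NonlocalReaction where
  growth := γ
  source t := exp ((q - 1) * η * β t)
  absorption t := k * exp ((p - 1) * η * β t)
  coupling t := δ * exp ((m + n - 1) * η * β t)
  p := p
  q := q
  n := n
  m := m

theorem isAdmissible_transformedReaction {γ k δ η p q n m T : ℝ} {β : ℝ → ℝ}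
    (hβ : ContinuousOn β (Icc 0 T)) (hk : 0 ≤ k) (hδ : 0 ≤ δ) (hp : 1 ≤ p) (hq : 1 ≤ q)
    (hn : 1 ≤ n) (hm : 0 ≤ m) : (transformedReaction γ k δ η p q n m β).IsAdmissible T where
  source_cont := (continuousOn_const.mul hβ).rexp
  source_pos _ _ := exp_pos _
  absorption_nonneg _ _ := mul_nonneg hk (exp_pos _).le
  coupling_cont := continuousOn_const.mul (continuousOn_const.mul hβ).rexp
  coupling_nonneg _ _ := mul_nonneg hδ (exp_pos _).le
  one_le_p := hp
  one_le_q := hq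
  one_le_n := hn
  m_nonneg := hm

/-- Comparison principle for the transformed random PDE (Proposition 3.1):
a supersolution `V` dominates the solution `v`. -/
theorem statement2 {d : ℕ} (hd : 1 ≤ d) {T : ℝ} (hT : 0 < T)
    {D : Set (EuclideanSpace ℝ (Fin d))} (hDopen : IsOpen D)
    (hDbdd : Bornology.IsBounded D)
    (β : ℝ → ℝ) (hβ : ContinuousOn β (Icc 0 T))
    {k γ δ η : ℝ} (hk : 0 < k) (hγ : 0 ≤ γ) (hδ : 0 ≤ δ) (hη : 0 ≤ η)
    {p q n m : ℝ} (hp : 1 < p) (hq : 1 < q) (hn : 1 < n) (hm : 0 ≤ m)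
    (f : EuclideanSpace ℝ (Fin d) → ℝ)
    (v vt V Vt : ℝ → EuclideanSpace ℝ (Fin d) → ℝ)
    -- `v` is continuous and nonnegative on `[0,T] × D̄`
    (hv_cont : ContinuousOn (fun pr : ℝ × EuclideanSpace ℝ (Fin d) => v pr.1 pr.2)
      (Icc 0 T ×ˢ closure D))
    (hv_nn : ∀ t ∈ Icc 0 T, ∀ x ∈ closure D, 0 ≤ v t x)
    -- the time derivative `∂v/∂t = vt` exists and is continuous on `(0,T] × D`
    (hv_t : ∀ t ∈ Ioc 0 T, ∀ x ∈ D, HasDerivAt (fun s => v s x) (vt t x) t)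
    (hvt_cont : ContinuousOn (fun pr : ℝ × EuclideanSpace ℝ (Fin d) => vt pr.1 pr.2)
      (Ioc 0 T ×ˢ D))
    (hv_x : ∀ t ∈ Ioc 0 T, ContDiffOn ℝ 2 (v t) D)
    -- `v` solves the transformed PDE on `(0,T] × D`
    (hv_pde : ∀ t ∈ Ioc 0 T, ∀ x ∈ D,
      vt t x = laplacian (v t) x + γ * v t x
        + exp ((q - 1) * η * β t) * (∫ y in D, v t y ^ q)
        - k * exp ((p - 1) * η * β t) * v t x ^ p
        + δ * exp ((m + n - 1) * η * β t) * v t x ^ m * (∫ y in D, v t y ^ n))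
    (hv_bdry : ∀ t ∈ Ioc 0 T, ∀ x ∈ frontier D, v t x = 0)
    (hv_init : ∀ x ∈ D, v 0 x = f x)
    -- `V` is continuous on `[0,T] × D̄` and strictly positive on `(0,T] × D`
    (hV_cont : ContinuousOn (fun pr : ℝ × EuclideanSpace ℝ (Fin d) => V pr.1 pr.2)
      (Icc 0 T ×ˢ closure D))
    (hV_pos : ∀ t ∈ Ioc 0 T, ∀ x ∈ D, 0 < V t x)
    -- the time derivative `∂V/∂t = Vt` exists and is continuous on `(0,T] × D`
    (hV_t : ∀ t ∈ Ioc 0 T, ∀ x ∈ D, HasDerivAt (fun s => V s x) (Vt t x) t)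
    (hVt_cont : ContinuousOn (fun pr : ℝ × EuclideanSpace ℝ (Fin d) => Vt pr.1 pr.2)
      (Ioc 0 T ×ˢ D))
    (hV_x : ∀ t ∈ Ioc 0 T, ContDiffOn ℝ 2 (V t) D)
    -- `V` is a supersolution of the transformed PDE on `(0,T] × D`
    (hV_pde : ∀ t ∈ Ioc 0 T, ∀ x ∈ D,
      laplacian (V t) x + γ * V t x
        + exp ((q - 1) * η * β t) * (∫ y in D, V t y ^ q)
        - k * exp ((p - 1) * η * β t) * V t x ^ p
        + δ * exp ((m + n - 1) * η * β t) * V t x ^ m * (∫ y in D, V t y ^ n) ≤ Vt t x)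
    (hV_bdry : ∀ t ∈ Ioc 0 T, ∀ x ∈ frontier D, 0 ≤ V t x)
    (hV_init : ∀ x ∈ D, f x ≤ V 0 x) :
    ∀ t ∈ Icc 0 T, ∀ x ∈ closure D, v t x ≤ V t x := by
  refine statement2_general (N := transformedReaction γ k δ η p q n m β) (vt := vt) (Vt := Vt)
    (isAdmissible_transformedReaction hβ hk.le hδ hp.le hq.le hn.le hm) hDopen hDbdd
    ⟨⟨hv_cont, hv_t, hv_x⟩, fun t ht x hx => ?_⟩ hv_nn (fun t ht x hx => (hv_bdry t ht x hx).le)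
    ⟨⟨hV_cont, hV_t, hV_x⟩, fun t ht x hx => ?_⟩ hV_pos hV_bdry
    fun x hx => (hv_init x hx).trans_le (hV_init x hx)
  · simp only [NonlocalReaction.eval, transformedReaction]
    linarith [hv_pde t ht x hx]
  · simp only [NonlocalReaction.eval, transformedReaction]
    linarith [hV_pde t ht x hx]
end

section
/- Let D ⊂ ℝ^d be a measurable set with Lebesgue measure |D| satisfying 0 < |D| < ∞, and let T > 0. Let k > 0, δ ≥ 0, η ≥ 0, γ ∈ ℝ, λ₁ > 0 be constants; let n > 1, let m satisfy m = 0 or m ≥ 1, and set μ = m + n; assume μ = q and q > p > 1. Let φ : D → [0,∞) be measurable with ∫_D φ(y) dy = 1 and with φ^{q/(q−p)}, φ^{n/(n−1)}, and φ^{p+1} integrable on D. Let β : [0,T] → ℝ be continuous with β*(T) = sup_{0≤s≤T}|β(s)|, and let b > 1 satisfy b^{q−p}·e^{−η(q−1)β*(T)} ≥ 2k·(∫_D φ^{q/(q−p)})^{(q−p)/p} / (∫_D φ^{p+1})^{(q−p)/p}. Let v : [0,T] × D → [0,∞) satisfy v(t,x) ≥ b·φ(x) for all (t,x), with v(t,·)^q,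 v(t,·)^n, v(t,·)^p·φ, v(t,·)^m·φ, v(t,·)·φ integrable on D for each t, and suppose J(t) := ∫_D v(t,x)·φ(x) dx is differentiable on [0,T] with J'(t) = (−λ₁+γ)·J(t) + e^{(μ−1)ηβ(t)}·∫_D v(t,y)^μ dy − k·e^{(p−1)ηβ(t)}·∫_D v(t,x)^p·φ(x) dx + δ·e^{(μ−1)ηβ(t)}·(∫_D v(t,z)^m·φ(z) dz)·(∫_D v(t,y)^n dy) for all t ∈ [0,T]. Set Ñ = (1/2)·(∫_D φ^{μ/(μ−p)})^{(p−μ)/p} + δ·(∫_D φ^{n/(n−1)})^{1−n}. Then for all t ∈ [0,T]: Ñ·(μ−1)·∫₀^t e^{η(μ−1)β(s) + (−λ₁+γ)(μ−1)s} ds < J(0)^{1−μ}. In particular T ≤ τ*₁ := inf{ t ≥ 0 : ∫₀^t e^{η(μ−1)β(s)+(−λ₁+γ)(μ−1)s} ds ≥ J(0)^{1−μ}/(Ñ(μ−1)) }. -/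
open MeasureTheory Real Set

/-!
Half of the source `∫ v^q` absorbs the term `k ∫ v^p φ`: by Hölder with exponent `q / p`,
`(∫ v^p φ)^{q/p}` is at most a constant times `∫ v^q`, and since `v ≥ b φ`, the extra factor
`(∫ v^p φ)^{q/p-1}` is as large as we wish once `b` is large. By Jensen the other half dominates
`J^q`, where `J = ∫ v φ`; Jensen and Hölder bound the nonlocal product `(∫ v^m φ) (∫ v^n)` below by
a multiple of `J^{m+n} = J^q` too. Hence `J' ≥ c J + Ñ e^{(q-1)ηβ} J^q`, and the Bernoulli
substitution `e^{c(q-1)t} J^{1-q}` turns this into a bound on a positive quantity which decreases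
at rate at least `Ñ (q-1) e^{η(q-1)β(t) + c(q-1)t}`.
-/

section WeightedIntegrals

variable {α : Type*} [MeasurableSpace α] {ν : Measure α} {f g w : α → ℝ} {b k m n p q r E δ : ℝ}

theorem aestronglyMeasurable_of_rpow (hr : r ≠ 0) (hf : 0 ≤ᵐ[ν] f)
    (h : AEStronglyMeasurable (fun x => f x ^ r) ν) : AEStronglyMeasurable f ν := by
  refine (h.aemeasurable.pow_const r⁻¹).aestronglyMeasurable.congr ?_
  filter_upwards [hf] with x hx using rpow_rpow_inv hx hr

theorem memLp_of_integrable_rpow (hr : 0 < r) (hf : 0 ≤ᵐ[ν] f)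
    (h : Integrable (fun x => f x ^ r) ν) : MemLp f (ENNReal.ofReal r) ν := by
  have hmeas := aestronglyMeasurable_of_rpow hr.ne' hf h.1
  refine (integrable_norm_rpow_iff hmeas (by simpa using hr) ENNReal.ofReal_ne_top).1 (h.congr ?_)
  filter_upwards [hf] with x hx
  rw [ENNReal.toReal_ofReal hr.le, norm_of_nonneg hx]

theorem integral_rpow_nonneg (hf : 0 ≤ᵐ[ν] f) (r : ℝ) : 0 ≤ ∫ x, f x ^ r ∂ν :=
  integral_nonneg_of_ae <| by filter_upwards [hf] with x hx using rpow_nonneg hx r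

theorem integral_mul_nonneg (hf : 0 ≤ᵐ[ν] f) (hg : 0 ≤ᵐ[ν] g) : 0 ≤ ∫ x, f x * g x ∂ν :=
  integral_nonneg_of_ae <| by filter_upwards [hf, hg] with x hx hy using mul_nonneg hx hy

theorem integral_pos_of_ae_eq_zero_imp (hf : 0 ≤ᵐ[ν] f) (hfi : Integrable f ν)
    (hw : ∫ x, w x ∂ν ≠ 0) (h : ∀ᵐ x ∂ν, f x = 0 → w x = 0) : 0 < ∫ x, f x ∂ν := by
  refine (integral_nonneg_of_ae hf).lt_of_ne fun hzero => hw (integral_eq_zero_of_ae ?_)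
  filter_upwards [(integral_eq_zero_iff_of_nonneg_ae hf hfi).1 hzero.symm, h] with x hx himp
    using himp hx

theorem integral_rpow_pos (hr : r ≠ 0) (hw : 0 ≤ᵐ[ν] w) (hw0 : ∫ x, w x ∂ν ≠ 0)
    (hwr : Integrable (fun x => w x ^ r) ν) : 0 < ∫ x, w x ^ r ∂ν := by
  refine integral_pos_of_ae_eq_zero_imp ?_ hwr hw0 ?_
  · filter_upwards [hw] with x hx using rpow_nonneg hx r
  · filter_upwards [hw] with x hx using fun h => (rpow_eq_zero hx hr).1 h

theorem ae_nonneg_of_const_mul_le (hb : 0 ≤ b) (hw : 0 ≤ᵐ[ν] w) (hlb : ∀ᵐ x ∂ν, b * w x ≤ f x) :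
    0 ≤ᵐ[ν] f := by
  filter_upwards [hw, hlb] with x hx hle using (mul_nonneg hb hx).trans hle

theorem integral_mul_pos_of_const_mul_le (hb : 0 < b) (hw : 0 ≤ᵐ[ν] w) (hw0 : ∫ x, w x ∂ν ≠ 0)
    (hlb : ∀ᵐ x ∂ν, b * w x ≤ f x) (hfw : Integrable (fun x => f x * w x) ν) :
    0 < ∫ x, f x * w x ∂ν := by
  have hf := ae_nonneg_of_const_mul_le hb.le hw hlb
  refine integral_pos_of_ae_eq_zero_imp ?_ hfw hw0 ?_
  · filter_upwards [hf, hw] with x hx hy using mul_nonneg hx hy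
  · filter_upwards [hw, hlb] with x hx hle hzero
    rcases mul_eq_zero.1 hzero with hfx | hwx
    · exact le_antisymm (nonpos_of_mul_nonpos_right (hle.trans hfx.le) hb) hx
    · exact hwx

theorem holder_rpow_integral_mul_le (hr : 1 < r) (hf : 0 ≤ᵐ[ν] f) (hg : 0 ≤ᵐ[ν] g)
    (hfr : Integrable (fun x => f x ^ r) ν) (hgr : Integrable (fun x => g x ^ (r / (r - 1))) ν) :
    (∫ x, f x * g x ∂ν) ^ r
      ≤ (∫ x, f x ^ r ∂ν) * (∫ x, g x ^ (r / (r - 1)) ∂ν) ^ (r - 1) := by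
  have hr0 : 0 < r := by linarith
  have hr1 : 0 < r - 1 := by linarith
  have hconj : r.HolderConjugate (r / (r - 1)) := .conjExponent hr
  have holder := integral_mul_le_Lp_mul_Lq_of_nonneg hconj hf hg
    (memLp_of_integrable_rpow hr0 hf hfr) (memLp_of_integrable_rpow (div_pos hr0 hr1) hg hgr)
  have hF := integral_rpow_nonneg hf r
  have hG := integral_rpow_nonneg hg (r / (r - 1))
  refine (rpow_le_rpow (integral_mul_nonneg hf hg) holder hr0.le).trans_eq ?_
  rw [mul_rpow (rpow_nonneg hF _) (rpow_nonneg hG _), ← rpow_mul hF, ← rpow_mul hG,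
    one_div_mul_cancel hr0.ne', rpow_one]
  congr 2
  field_simp

theorem jensen_rpow_integral_mul_le (hr : 1 ≤ r) (hf : 0 ≤ᵐ[ν] f) (hw : 0 ≤ᵐ[ν] w)
    (hwi : Integrable w ν) (hfr : Integrable (fun x => f x ^ r * w x) ν) :
    (∫ x, f x * w x ∂ν) ^ r ≤ (∫ x, f x ^ r * w x ∂ν) * (∫ x, w x ∂ν) ^ (r - 1) := by
  rcases hr.eq_or_lt with rfl | hr
  · simp only [rpow_one, sub_self, rpow_zero, mul_one, le_refl]
  have hr0 : 0 < r := by linarith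
  have hr1 : 0 < r - 1 := by linarith
  have hleft : (fun x => (f x * w x ^ r⁻¹) ^ r) =ᵐ[ν] fun x => f x ^ r * w x := by
    filter_upwards [hf, hw] with x hx hy
    rw [mul_rpow hx (rpow_nonneg hy _), rpow_inv_rpow hy hr0.ne']
  have hright : (fun x => (w x ^ ((r - 1) / r)) ^ (r / (r - 1))) =ᵐ[ν] w := by
    filter_upwards [hw] with x hy
    rw [← rpow_mul hy, div_mul_div_cancel₀ hr0.ne', div_self hr1.ne', rpow_one]
  have hprod : (fun x => f x * w x ^ r⁻¹ * w x ^ ((r - 1) / r)) =ᵐ[ν] fun x => f x * w x := by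
    filter_upwards [hw] with x hy
    have hexp : r⁻¹ + (r - 1) / r = 1 := by field_simp; ring
    rw [mul_assoc, ← rpow_add_of_nonneg hy (by positivity) (by positivity), hexp, rpow_one]
  have holder := holder_rpow_integral_mul_le (ν := ν) (f := fun x => f x * w x ^ r⁻¹)
    (g := fun x => w x ^ ((r - 1) / r)) hr
    (by filter_upwards [hf, hw] with x hx hy using mul_nonneg hx (rpow_nonneg hy _))
    (by filter_upwards [hw] with x hy using rpow_nonneg hy _)
    (hfr.congr hleft.symm) (hwi.congr hright.symm)
  rwa [integral_congr_ae hleft, integral_congr_ae hright, integral_congr_ae hprod] at holder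

theorem rpow_integral_rpow_mul_le (hp : 0 < p) (hpq : p < q) (hf : 0 ≤ᵐ[ν] f) (hw : 0 ≤ᵐ[ν] w)
    (hfq : Integrable (fun x => f x ^ q) ν) (hwq : Integrable (fun x => w x ^ (q / (q - p))) ν) :
    (∫ x, f x ^ p * w x ∂ν) ^ (q / p)
      ≤ (∫ x, f x ^ q ∂ν) * (∫ x, w x ^ (q / (q - p)) ∂ν) ^ ((q - p) / p) := by
  have hpow : (fun x => (f x ^ p) ^ (q / p)) =ᵐ[ν] fun x => f x ^ q := by
    filter_upwards [hf] with x hx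
    rw [← rpow_mul hx, mul_div_cancel₀ _ hp.ne']
  have hconj : q / p / (q / p - 1) = q / (q - p) := by field_simp
  have hexp : q / p - 1 = (q - p) / p := by field_simp
  have holder := holder_rpow_integral_mul_le (ν := ν) (f := fun x => f x ^ p)
    ((one_lt_div hp).2 hpq) (by filter_upwards [hf] with x hx using rpow_nonneg hx p) hw
    (hfq.congr hpow.symm) (by rwa [hconj])
  rwa [integral_congr_ae hpow, hconj, hexp] at holder

theorem const_rpow_mul_integral_rpow_le (hb : 0 ≤ b) (hp : 0 ≤ p) (hw : 0 ≤ᵐ[ν] w)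
    (hlb : ∀ᵐ x ∂ν, b * w x ≤ f x) (hwp : Integrable (fun x => w x ^ (p + 1)) ν)
    (hfp : Integrable (fun x => f x ^ p * w x) ν) :
    b ^ p * ∫ x, w x ^ (p + 1) ∂ν ≤ ∫ x, f x ^ p * w x ∂ν := by
  rw [← integral_const_mul]
  refine integral_mono_ae (hwp.const_mul _) hfp ?_
  filter_upwards [hw, hlb] with x hx hle
  calc b ^ p * w x ^ (p + 1) = (b * w x) ^ p * w x := by
        rw [mul_rpow hb hx, rpow_add_one' hx (by positivity), mul_assoc]
    _ ≤ f x ^ p * w x := by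
        have := mul_nonneg hb hx
        gcongr

theorem absorption_le_half_source (hb : 0 ≤ b) (hp : 0 < p) (hpq : p < q) (hE : 0 ≤ E)
    (hw : 0 ≤ᵐ[ν] w) (hw0 : ∫ x, w x ∂ν ≠ 0) (hlb : ∀ᵐ x ∂ν, b * w x ≤ f x)
    (hwq : Integrable (fun x => w x ^ (q / (q - p))) ν)
    (hwp : Integrable (fun x => w x ^ (p + 1)) ν)
    (hfq : Integrable (fun x => f x ^ q) ν) (hfp : Integrable (fun x => f x ^ p * w x) ν)
    (hlarge : 2 * k * (∫ x, w x ^ (q / (q - p)) ∂ν) ^ ((q - p) / p)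
        / (∫ x, w x ^ (p + 1) ∂ν) ^ ((q - p) / p) ≤ b ^ (q - p) * E) :
    k * ∫ x, f x ^ p * w x ∂ν ≤ 1 / 2 * (E * ∫ x, f x ^ q ∂ν) := by
  have hqp : 0 < q - p := by linarith
  have hq : 0 < q := by linarith
  have hf := ae_nonneg_of_const_mul_le hb hw hlb
  have hA := integral_rpow_pos (div_pos hq hqp).ne' hw hw0 hwq
  have hC := integral_rpow_pos (by positivity) hw hw0 hwp
  have hCW := const_rpow_mul_integral_rpow_le hb hp.le hw hlb hwp hfp
  have hWX := rpow_integral_rpow_mul_le hp hpq hf hw hfq hwq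
  set A := ∫ x, w x ^ (q / (q - p)) ∂ν
  set C := ∫ x, w x ^ (p + 1) ∂ν
  set W := ∫ x, f x ^ p * w x ∂ν
  set X := ∫ x, f x ^ q ∂ν
  have hW : 0 ≤ W := le_trans (by positivity) hCW
  have hAθ : 0 < A ^ ((q - p) / p) := by positivity
  have hbC : b ^ (q - p) * C ^ ((q - p) / p) = (b ^ p * C) ^ ((q - p) / p) := by
    rw [mul_rpow (by positivity) hC.le, ← rpow_mul hb, mul_div_cancel₀ _ hp.ne']
  have hcoeff : 2 * k * A ^ ((q - p) / p) ≤ E * W ^ ((q - p) / p) := by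
    rw [div_le_iff₀ (by positivity)] at hlarge
    calc 2 * k * A ^ ((q - p) / p) ≤ E * (b ^ p * C) ^ ((q - p) / p) := by
          rw [← hbC]; linarith
      _ ≤ E * W ^ ((q - p) / p) := by gcongr
  have hsplit : W ^ ((q - p) / p) * W = W ^ (q / p) := by
    rw [← rpow_add_one' hW (by positivity)]
    congr 1
    field_simp
    ring
  have hscaled : 2 * k * W * A ^ ((q - p) / p) ≤ E * X * A ^ ((q - p) / p) :=
    calc 2 * k * W * A ^ ((q - p) / p) = 2 * k * A ^ ((q - p) / p) * W := by ring
      _ ≤ E * W ^ ((q - p) / p) * W := by gcongr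
      _ = E * W ^ (q / p) := by rw [mul_assoc, hsplit]
      _ ≤ E * (X * A ^ ((q - p) / p)) := by gcongr
      _ = E * X * A ^ ((q - p) / p) := by ring
  linarith [le_of_mul_le_mul_right hscaled hAθ]

theorem rpow_integral_mul_le_source (hp : 1 ≤ p) (hpq : p < q) (hf : 0 ≤ᵐ[ν] f)
    (hw : 0 ≤ᵐ[ν] w) (hw1 : ∫ x, w x ∂ν = 1)
    (hwq : Integrable (fun x => w x ^ (q / (q - p))) ν)
    (hfq : Integrable (fun x => f x ^ q) ν) (hfp : Integrable (fun x => f x ^ p * w x) ν) :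
    (∫ x, w x ^ (q / (q - p)) ∂ν) ^ ((p - q) / p) * (∫ x, f x * w x ∂ν) ^ q
      ≤ ∫ x, f x ^ q ∂ν := by
  have hp0 : 0 < p := by linarith
  have hq : 0 < q := by linarith
  have hqp : 0 < q - p := by linarith
  have hI := integral_mul_nonneg hf hw
  have hA := integral_rpow_pos (div_pos hq hqp).ne' hw (hw1 ▸ one_ne_zero) hwq
  have jensen := jensen_rpow_integral_mul_le hp hf hw (integrable_of_integral_eq_one hw1) hfp
  rw [hw1, one_rpow, mul_one] at jensen
  have hexp : (p - q) / p = -((q - p) / p) := by ring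
  rw [hexp, rpow_neg hA.le, inv_mul_le_iff₀' (by positivity)]
  calc (∫ x, f x * w x ∂ν) ^ q = ((∫ x, f x * w x ∂ν) ^ p) ^ (q / p) := by
        rw [← rpow_mul hI, mul_div_cancel₀ _ hp0.ne']
    _ ≤ (∫ x, f x ^ p * w x ∂ν) ^ (q / p) := by gcongr
    _ ≤ _ := rpow_integral_rpow_mul_le hp0 hpq hf hw hfq hwq

theorem rpow_integral_mul_le_nonlocal_source (hn : 1 < n) (hm : m = 0 ∨ 1 ≤ m)
    (hf : 0 ≤ᵐ[ν] f) (hw : 0 ≤ᵐ[ν] w) (hw1 : ∫ x, w x ∂ν = 1)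
    (hwn : Integrable (fun x => w x ^ (n / (n - 1))) ν)
    (hfn : Integrable (fun x => f x ^ n) ν) (hfm : Integrable (fun x => f x ^ m * w x) ν) :
    (∫ x, w x ^ (n / (n - 1)) ∂ν) ^ (1 - n) * (∫ x, f x * w x ∂ν) ^ (m + n)
      ≤ (∫ x, f x ^ m * w x ∂ν) * ∫ x, f x ^ n ∂ν := by
  have hn0 : 0 < n := by linarith
  have hn1 : 0 < n - 1 := by linarith
  have hm0 : 0 ≤ m := by rcases hm with rfl | hm <;> linarith
  have hI := integral_mul_nonneg hf hw
  have hB := integral_rpow_pos (div_pos hn0 hn1).ne' hw (hw1 ▸ one_ne_zero) hwn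
  have jensen : (∫ x, f x * w x ∂ν) ^ m ≤ ∫ x, f x ^ m * w x ∂ν := by
    rcases hm with rfl | hm
    · simp only [rpow_zero, one_mul, hw1, le_refl]
    · simpa only [hw1, one_rpow, mul_one] using
        jensen_rpow_integral_mul_le hm hf hw (integrable_of_integral_eq_one hw1) hfm
  have holder : (∫ x, w x ^ (n / (n - 1)) ∂ν) ^ (1 - n) * (∫ x, f x * w x ∂ν) ^ n
      ≤ ∫ x, f x ^ n ∂ν := by
    rw [← neg_sub n 1, rpow_neg hB.le, inv_mul_le_iff₀' (by positivity)]
    exact holder_rpow_integral_mul_le hn hf hw hfn hwn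
  rw [rpow_add_of_nonneg hI hm0 (by linarith), mul_left_comm]
  exact mul_le_mul jensen holder (by positivity) ((rpow_nonneg hI m).trans jensen)

/-- The constant `Ñ` governing the blow-up rate, for the weight `w` on the measure space `(α, ν)`
and in the case `μ = q`. -/
noncomputable def blowUpConst (ν : Measure α) (w : α → ℝ) (p q n δ : ℝ) : ℝ :=
  1 / 2 * (∫ x, w x ^ (q / (q - p)) ∂ν) ^ ((p - q) / p)
    + δ * (∫ x, w x ^ (n / (n - 1)) ∂ν) ^ (1 - n)

theorem blowUpConst_pos (hp : 0 ≤ p) (hpq : p < q) (hδ : 0 ≤ δ) (hw : 0 ≤ᵐ[ν] w)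
    (hw0 : ∫ x, w x ∂ν ≠ 0) (hwq : Integrable (fun x => w x ^ (q / (q - p))) ν) :
    0 < blowUpConst ν w p q n δ := by
  have hA := integral_rpow_pos (div_pos (by linarith) (by linarith)).ne' hw hw0 hwq
  have hB := integral_rpow_nonneg hw (n / (n - 1))
  unfold blowUpConst
  positivity

theorem blowUpConst_mul_rpow_le (hb : 0 ≤ b) (hn : 1 < n) (hm : m = 0 ∨ 1 ≤ m) (hq : q = m + n)
    (hp : 1 ≤ p) (hpq : p < q) (hδ : 0 ≤ δ) (hE : 0 ≤ E)
    (hw : 0 ≤ᵐ[ν] w) (hw1 : ∫ x, w x ∂ν = 1) (hlb : ∀ᵐ x ∂ν, b * w x ≤ f x)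
    (hwq : Integrable (fun x => w x ^ (q / (q - p))) ν)
    (hwn : Integrable (fun x => w x ^ (n / (n - 1))) ν)
    (hwp : Integrable (fun x => w x ^ (p + 1)) ν)
    (hfq : Integrable (fun x => f x ^ q) ν) (hfn : Integrable (fun x => f x ^ n) ν)
    (hfp : Integrable (fun x => f x ^ p * w x) ν) (hfm : Integrable (fun x => f x ^ m * w x) ν)
    (hlarge : 2 * k * (∫ x, w x ^ (q / (q - p)) ∂ν) ^ ((q - p) / p)
        / (∫ x, w x ^ (p + 1) ∂ν) ^ ((q - p) / p) ≤ b ^ (q - p) * E) :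
    blowUpConst ν w p q n δ * E * (∫ x, f x * w x ∂ν) ^ q
      ≤ E * (∫ x, f x ^ q ∂ν) - k * (∫ x, f x ^ p * w x ∂ν)
        + δ * E * (∫ x, f x ^ m * w x ∂ν) * ∫ x, f x ^ n ∂ν := by
  have hf := ae_nonneg_of_const_mul_le hb hw hlb
  have habsorb := absorption_le_half_source hb (by linarith) hpq hE hw (hw1 ▸ one_ne_zero) hlb
    hwq hwp hfq hfp hlarge
  have hsource := mul_le_mul_of_nonneg_left
    (rpow_integral_mul_le_source hp hpq hf hw hw1 hwq hfq hfp) hE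
  have hnonlocal := mul_le_mul_of_nonneg_left
    (rpow_integral_mul_le_nonlocal_source hn hm hf hw hw1 hwn hfn hfm) (mul_nonneg hδ hE)
  rw [← hq] at hnonlocal
  unfold blowUpConst
  linarith

end WeightedIntegrals

section BernoulliInequality

theorem bernoulli_substitution_deriv_le {x x' c E μ : ℝ} (hx : 0 < x) (hμ : 1 ≤ μ)
    (h : c * x + E * x ^ μ ≤ x') :
    c * (μ - 1) * x ^ (1 - μ) + x' * (1 - μ) * x ^ (1 - μ - 1) ≤ -((μ - 1) * E) := by
  have hsplit : x ^ (1 - μ) = x * x ^ (-μ) := by rw [sub_eq_add_neg, rpow_add hx, rpow_one]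
  have hcancel : x ^ μ * x ^ (-μ) = 1 := by rw [← rpow_add hx, add_neg_cancel, rpow_zero]
  have hscale : 0 ≤ (μ - 1) * x ^ (-μ) := mul_nonneg (by linarith) (by positivity)
  rw [hsplit, show 1 - μ - 1 = -μ by ring]
  linear_combination (mul_le_mul_of_nonneg_left h hscale) - E * (μ - 1) * hcancel

theorem mul_integral_exp_mul_lt_of_bernoulli_le {J J' E : ℝ → ℝ} {c μ a b : ℝ} (hμ : 1 ≤ μ)
    (hab : a ≤ b) (hE : IntegrableOn E (Icc a b)) (hJ : ∀ s ∈ Icc a b, 0 < J s)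
    (hcont : ContinuousOn J (Icc a b))
    (hderiv : ∀ s ∈ Ioo a b, HasDerivWithinAt J (J' s) (Ioi s) s)
    (hle : ∀ s ∈ Ioo a b, c * J s + E s * J s ^ μ ≤ J' s) :
    (μ - 1) * (∫ s in a..b, exp (c * (μ - 1) * s) * E s)
      < exp (c * (μ - 1) * a) * J a ^ (1 - μ) := by
  set F : ℝ → ℝ := fun s => exp (c * (μ - 1) * s) * J s ^ (1 - μ)
  have hFcont : ContinuousOn F (Icc a b) :=
    ContinuousOn.mul (by fun_prop) (hcont.rpow_const fun s hs => Or.inl (hJ s hs).ne')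
  have hFderiv : ∀ s ∈ Ioo a b, HasDerivWithinAt F
      (exp (c * (μ - 1) * s) * (c * (μ - 1)) * J s ^ (1 - μ)
        + exp (c * (μ - 1) * s) * (J' s * (1 - μ) * J s ^ (1 - μ - 1))) (Ioi s) s := by
    intro s hs
    exact (hasDerivAt_const_mul (c * (μ - 1))).exp.hasDerivWithinAt.mul
      ((hderiv s hs).rpow_const (Or.inl (hJ s (Ioo_subset_Icc_self hs)).ne'))
  have hint : IntegrableOn (fun s => exp (c * (μ - 1) * s) * E s) (Icc a b) :=
    hE.continuousOn_mul (by fun_prop) isCompact_Icc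
  have hdecrease : F b - F a ≤ ∫ s in a..b, -(μ - 1) * (exp (c * (μ - 1) * s) * E s) := by
    refine intervalIntegral.sub_le_integral_of_hasDeriv_right_of_le hab hFcont hFderiv
      (hint.const_mul _) fun s hs => ?_
    have hrate := mul_le_mul_of_nonneg_left (bernoulli_substitution_deriv_le
      (hJ s (Ioo_subset_Icc_self hs)) hμ (hle s hs)) (exp_nonneg (c * (μ - 1) * s))
    linarith
  rw [intervalIntegral.integral_const_mul] at hdecrease
  have hFb : 0 < F b := mul_pos (exp_pos _) (rpow_pos_of_pos (hJ b (right_mem_Icc.2 hab)) _)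
  linarith

theorem mul_integral_exp_lt_of_bernoulli_le {J J' g : ℝ → ℝ} {c N μ t : ℝ} (hμ : 1 ≤ μ)
    (ht : 0 ≤ t) (hg : ContinuousOn g (Icc 0 t)) (hJ : ∀ s ∈ Icc 0 t, 0 < J s)
    (hderiv : ∀ s ∈ Icc 0 t, HasDerivWithinAt J (J' s) (Icc 0 t) s)
    (hle : ∀ s ∈ Icc 0 t, c * J s + N * exp (g s) * J s ^ μ ≤ J' s) :
    N * (μ - 1) * (∫ s in (0:ℝ)..t, exp (g s + c * (μ - 1) * s)) < J 0 ^ (1 - μ) := by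
  have hbound := mul_integral_exp_mul_lt_of_bernoulli_le (E := fun s => N * exp (g s)) hμ ht
    (ContinuousOn.integrableOn_Icc (by fun_prop)) hJ (fun s hs => (hderiv s hs).continuousWithinAt)
    (fun s hs => ((hderiv s (Ioo_subset_Icc_self hs)).hasDerivAt
      (Icc_mem_nhds hs.1 hs.2)).hasDerivWithinAt)
    (fun s hs => hle s (Ioo_subset_Icc_self hs))
  rw [mul_zero, exp_zero, one_mul] at hbound
  refine lt_of_eq_of_lt ?_ hbound
  rw [mul_comm N, mul_assoc, ← intervalIntegral.integral_const_mul]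
  congr 2 with s
  rw [exp_add]
  ring

end BernoulliInequality

theorem exp_neg_mul_iSup_abs_le {X : Type*} [TopologicalSpace X] {β : X → ℝ} {K : Set X}
    (hK : IsCompact K) (hβ : ContinuousOn β K) {A B : ℝ} (hAB : |A| ≤ B) {s : X} (hs : s ∈ K) :
    exp (-(B * ⨆ t : K, |β t|)) ≤ exp (A * β s) := by
  have hbdd : BddAbove (range fun t : K => |β t|) := by
    have := hK.bddAbove_image hβ.abs
    rwa [image_eq_range] at this
  have hsup : |β s| ≤ ⨆ t : K, |β t| := le_ciSup hbdd ⟨s, hs⟩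
  have hprod : |A * β s| ≤ B * ⨆ t : K, |β t| := by
    rw [abs_mul]
    exact mul_le_mul hAB hsup (abs_nonneg _) ((abs_nonneg A).trans hAB)
  exact exp_le_exp.2 (neg_le_of_abs_le hprod)

theorem statement11_general {α : Type*} [MeasurableSpace α] {ν : Measure α} {T k δ η c : ℝ}
    (hδ : 0 ≤ δ) {p q n m : ℝ} (hn : 1 < n) (hm : m = 0 ∨ 1 ≤ m) (hq : q = m + n) (hp : 1 ≤ p)
    (hpq : p < q) {φ : α → ℝ} (hφ_nonneg : 0 ≤ᵐ[ν] φ) (hφ_int : ∫ x, φ x ∂ν = 1)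
    (hφq : Integrable (fun x => φ x ^ (q / (q - p))) ν)
    (hφn : Integrable (fun x => φ x ^ (n / (n - 1))) ν)
    (hφp : Integrable (fun x => φ x ^ (p + 1)) ν)
    {β : ℝ → ℝ} (hβ : ContinuousOn β (Icc 0 T)) {b : ℝ} (hb : 0 < b)
    (hlarge : ∀ t ∈ Icc 0 T, 2 * k * (∫ x, φ x ^ (q / (q - p)) ∂ν) ^ ((q - p) / p)
        / (∫ x, φ x ^ (p + 1) ∂ν) ^ ((q - p) / p) ≤ b ^ (q - p) * exp ((q - p) * η * β t))
    {v : ℝ → α → ℝ} (hv_lb : ∀ t ∈ Icc 0 T, ∀ᵐ x ∂ν, b * φ x ≤ v t x)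
    (hvq : ∀ t ∈ Icc 0 T, Integrable (fun x => v t x ^ q) ν)
    (hvn : ∀ t ∈ Icc 0 T, Integrable (fun x => v t x ^ n) ν)
    (hvp : ∀ t ∈ Icc 0 T, Integrable (fun x => v t x ^ p * φ x) ν)
    (hvm : ∀ t ∈ Icc 0 T, Integrable (fun x => v t x ^ m * φ x) ν)
    (hvφ : ∀ t ∈ Icc 0 T, Integrable (fun x => v t x * φ x) ν)
    {J : ℝ → ℝ} (hJ : ∀ t ∈ Icc 0 T, J t = ∫ x, v t x * φ x ∂ν)
    (hJ' : ∀ t ∈ Icc 0 T, HasDerivWithinAt J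
      (c * J t + exp ((q - 1) * η * β t) * (∫ x, v t x ^ q ∂ν)
        - k * exp ((p - 1) * η * β t) * (∫ x, v t x ^ p * φ x ∂ν)
        + δ * exp ((q - 1) * η * β t) * (∫ x, v t x ^ m * φ x ∂ν) * (∫ x, v t x ^ n ∂ν))
      (Icc 0 T) t) :
    (∀ t ∈ Icc 0 T, blowUpConst ν φ p q n δ * (q - 1) *
        (∫ s in (0:ℝ)..t, exp (η * (q - 1) * β s + c * (q - 1) * s)) < J 0 ^ (1 - q)) ∧
    (∀ t : ℝ, 0 ≤ t → J 0 ^ (1 - q) / (blowUpConst ν φ p q n δ * (q - 1))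
        ≤ ∫ s in (0:ℝ)..t, exp (η * (q - 1) * β s + c * (q - 1) * s) → T ≤ t) := by
  have hφ0 : ∫ x, φ x ∂ν ≠ 0 := hφ_int ▸ one_ne_zero
  set N := blowUpConst ν φ p q n δ
  have hNpos : 0 < N := blowUpConst_pos (by linarith) hpq hδ hφ_nonneg hφ0 hφq
  have hineq : ∀ s ∈ Icc 0 T, N * exp ((q - 1) * η * β s) * J s ^ q
      ≤ exp ((q - 1) * η * β s) * (∫ x, v s x ^ q ∂ν)
        - k * exp ((p - 1) * η * β s) * (∫ x, v s x ^ p * φ x ∂ν)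
        + δ * exp ((q - 1) * η * β s) * (∫ x, v s x ^ m * φ x ∂ν) * ∫ x, v s x ^ n ∂ν := by
    intro s hs
    rw [hJ s hs]
    refine blowUpConst_mul_rpow_le hb.le hn hm hq hp hpq hδ (exp_nonneg _) hφ_nonneg hφ_int
      (hv_lb s hs) hφq hφn hφp (hvq s hs) (hvn s hs) (hvp s hs) (hvm s hs) ?_
    have hexp : exp ((q - 1) * η * β s) = exp ((q - p) * η * β s) * exp ((p - 1) * η * β s) := by
      rw [← exp_add]
      congr 1
      ring
    rw [hexp, ← mul_assoc (b ^ (q - p))]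
    refine le_of_eq_of_le ?_
      (mul_le_mul_of_nonneg_right (hlarge s hs) (exp_nonneg ((p - 1) * η * β s)))
    ring
  have hbound : ∀ t ∈ Icc 0 T, N * (q - 1) *
      (∫ s in (0:ℝ)..t, exp (η * (q - 1) * β s + c * (q - 1) * s)) < J 0 ^ (1 - q) := by
    intro t ht
    have hsub : Icc 0 t ⊆ Icc 0 T := Icc_subset_Icc_right ht.2
    refine mul_integral_exp_lt_of_bernoulli_le (by linarith) ht.1 ((hβ.mono hsub).const_mul _)
      (fun s hs => ?_) (fun s hs => (hJ' s (hsub hs)).mono hsub) fun s hs => ?_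
    · rw [hJ s (hsub hs)]
      exact integral_mul_pos_of_const_mul_le hb hφ_nonneg hφ0 (hv_lb s (hsub hs)) (hvφ s (hsub hs))
    · rw [mul_comm η (q - 1)]
      linarith [hineq s (hsub hs)]
  refine ⟨hbound, fun t ht hcross => ?_⟩
  by_contra! hlt
  rw [div_le_iff₀ (mul_pos hNpos (by linarith))] at hcross
  linarith [hbound t ⟨ht, hlt.le⟩]

/-- Pathwise upper bound for the blow-up time in the case `m + n = q`
(Theorem 5.1, case 1): on any interval `[0,T]` on which the solution exists, the
functional `J(t) = ∫_D v(t,x)φ(x)dx` satisfies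
`Ñ(μ−1)∫₀^t e^{η(μ−1)β(s)+(−λ₁+γ)(μ−1)s} ds < J(0)^{1−μ}`; in particular `T ≤ τ*₁`. -/
theorem statement11 {d : ℕ} (D : Set (EuclideanSpace ℝ (Fin d)))
    (hDmeas : MeasurableSet D) (hD0 : 0 < volume D) (hDfin : volume D < ⊤)
    (T : ℝ) (hT : 0 < T)
    (k δ η γ lam1 : ℝ) (hk : 0 < k) (hδ : 0 ≤ δ) (hη : 0 ≤ η) (hlam : 0 < lam1)
    (p q n m μ : ℝ) (hn : 1 < n) (hm : m = 0 ∨ 1 ≤ m)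
    (hμ : μ = m + n) (hμq : μ = q) (hp : 1 < p) (hpq : p < q)
    (φ : EuclideanSpace ℝ (Fin d) → ℝ) (hφmeas : Measurable φ)
    (hφnn : ∀ x ∈ D, 0 ≤ φ x)
    (hφ_int : (∫ y in D, φ y) = 1)
    (hφ1 : IntegrableOn (fun y => φ y ^ (q / (q - p))) D)
    (hφ2 : IntegrableOn (fun y => φ y ^ (n / (n - 1))) D)
    (hφ3 : IntegrableOn (fun y => φ y ^ (p + 1)) D)
    (β : ℝ → ℝ) (hβ : ContinuousOn β (Icc 0 T))
    (b : ℝ) (hb : 1 < b)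
    -- the third condition of (B1), with `β*(T) = sup_{0≤s≤T}|β(s)|`
    (hcond : 2 * k * (∫ y in D, φ y ^ (q / (q - p))) ^ ((q - p) / p)
        / (∫ y in D, φ y ^ (p + 1)) ^ ((q - p) / p)
      ≤ b ^ (q - p) * exp (-(η * (q - 1) * (⨆ s : Icc (0:ℝ) T, |β (s : ℝ)|))))
    (v : ℝ → EuclideanSpace ℝ (Fin d) → ℝ)
    (hv_nn : ∀ t ∈ Icc 0 T, ∀ x ∈ D, 0 ≤ v t x)
    (hv_lb : ∀ t ∈ Icc 0 T, ∀ x ∈ D, b * φ x ≤ v t x)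
    (hv1 : ∀ t ∈ Icc 0 T, IntegrableOn (fun y => v t y ^ q) D)
    (hv2 : ∀ t ∈ Icc 0 T, IntegrableOn (fun y => v t y ^ n) D)
    (hv3 : ∀ t ∈ Icc 0 T, IntegrableOn (fun x => v t x ^ p * φ x) D)
    (hv4 : ∀ t ∈ Icc 0 T, IntegrableOn (fun x => v t x ^ m * φ x) D)
    (hv5 : ∀ t ∈ Icc 0 T, IntegrableOn (fun x => v t x * φ x) D)
    (J : ℝ → ℝ) (hJ : ∀ t ∈ Icc 0 T, J t = ∫ x in D, v t x * φ x)
    -- `J` is differentiable, with derivative given by the identity obtained from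
    -- the transformed PDE via `−Δφ = λ₁φ`, `∫_D φ = 1` and integration by parts
    (hJ' : ∀ t ∈ Icc 0 T, HasDerivAt J
      ((-lam1 + γ) * J t
        + exp ((μ - 1) * η * β t) * (∫ y in D, v t y ^ μ)
        - k * exp ((p - 1) * η * β t) * (∫ x in D, v t x ^ p * φ x)
        + δ * exp ((μ - 1) * η * β t) * (∫ z in D, v t z ^ m * φ z)
            * (∫ y in D, v t y ^ n)) t)
    (N : ℝ) (hN : N = (1 / 2) * (∫ x in D, φ x ^ (μ / (μ - p))) ^ ((p - μ) / p)
      + δ * (∫ x in D, φ x ^ (n / (n - 1))) ^ (1 - n)) :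
    (∀ t ∈ Icc 0 T,
      N * (μ - 1) * (∫ s in (0:ℝ)..t,
          exp (η * (μ - 1) * β s + (-lam1 + γ) * (μ - 1) * s))
        < J 0 ^ (1 - μ)) ∧
    -- `T ≤ τ*₁`
    (∀ t : ℝ, 0 ≤ t →
      J 0 ^ (1 - μ) / (N * (μ - 1)) ≤ ∫ s in (0:ℝ)..t,
          exp (η * (μ - 1) * β s + (-lam1 + γ) * (μ - 1) * s) →
      T ≤ t) := by
  subst hμq hN
  have hD {P : EuclideanSpace ℝ (Fin d) → Prop} (h : ∀ x ∈ D, P x) :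
      ∀ᵐ x ∂volume.restrict D, P x := ae_restrict_of_forall_mem hDmeas h
  refine statement11_general hδ hn hm hμ hp.le hpq (hD hφnn) hφ_int hφ1 hφ2 hφ3 hβ
    (by linarith) (fun t ht => hcond.trans ?_) (fun t ht => hD (hv_lb t ht)) hv1 hv2 hv3 hv4 hv5 hJ
    fun t ht => (hJ' t ht).hasDerivWithinAt
  have hcoeff : |(μ - p) * η| ≤ η * (μ - 1) := by
    rw [abs_of_nonneg (mul_nonneg (by linarith) hη), mul_comm η]
    exact mul_le_mul_of_nonneg_right (by linarith) hη
  gcongr b ^ (μ - p) * ?_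
  exact exp_neg_mul_iSup_abs_le isCompact_Icc hβ hcoeff ht
end
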